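/- arXiv:2406.16599 — 2 statements merged into one kernel-verified Lean document; each statement's English description precedes it below -/
import Mathlib

section
/- Let R be a commutative ring, S a multiplicative set in R, and F a matrix in R[t]^{l×m}. Then the following are equivalent: (1) F(t) is equivalent to F(0) over the localized polynomial ring R_S[t]; (2) there exists b ∈ S such that the matrix F(t + b·x) is equivalent to F(t) over the polynomial ring R[t, x]. -/
/-- Two `l × m` matrices over a commutative ring are equivalent if they differ by
left/right multiplication by square matrices with unit determinant. -/
def MatrixEquiv {B : Type*} [CommRing B] {l m : ℕ}
    (F G : Matrix (Fin l) (Fin m) B) : Prop :=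
  ∃ (U : Matrix (Fin l) (Fin l) B) (V : Matrix (Fin m) (Fin m) B),
    IsUnit U.det ∧ IsUnit V.det ∧ F = U * G * V

open Polynomial

section Dilation

variable {A B : Type*} [CommRing A] [CommRing B]

/-- The substitution `x ↦ c * x` on `A[x]`. -/
noncomputable def dilation (c : A) : A[X] →+* A[X] :=
  compRingHom (C c * X)

theorem dilation_apply (c : A) (p : A[X]) : dilation c p = p.comp (C c * X) := rfl

@[simp]
theorem dilation_C (c a : A) : dilation c (C a) = C a := by
  simp [dilation_apply]

@[simp]
theorem dilation_X (c : A) : dilation c X = C c * X := by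
  simp [dilation_apply]

theorem dilation_dilation (b c : A) (p : A[X]) :
    dilation c (dilation b p) = dilation (b * c) p := by
  simp only [dilation_apply, comp_assoc]
  simp [mul_assoc]

theorem constantCoeff_dilation (c : A) (p : A[X]) :
    constantCoeff (dilation c p) = constantCoeff p := by
  simp [dilation_apply, constantCoeff_apply, coeff_zero_eq_eval_zero, eval_comp]

theorem map_dilation (f : A →+* B) (c : A) (p : A[X]) :
    (dilation c p).map f = dilation (f c) (p.map f) := by
  simp [dilation_apply, Polynomial.map_comp]

variable [Algebra A B] (M : Submonoid A) [IsLocalization M B]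

/-- After a dilation by any multiple of a suitable denominator, a polynomial over the localization
whose constant coefficient comes from `A` lifts to `A[x]`. -/
theorem exists_lift_dilation (p : B[X]) (a : A)
    (hp : constantCoeff p = algebraMap A B a) :
    ∃ b ∈ M, ∀ c, b ∣ c → ∃ q : A[X], constantCoeff q = a ∧
      q.map (algebraMap A B) = dilation (algebraMap A B c) p := by
  obtain ⟨b, hbM, hb⟩ := IsLocalization.integerNormalization_spec M p.divX
  refine ⟨b, hbM, ?_⟩
  rintro _ ⟨d, rfl⟩
  refine ⟨C d * dilation (b * d) (IsLocalization.integerNormalization M p.divX) * X + C a,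
    by simp, ?_⟩
  have key : p.divX * X + C (algebraMap A B a) = p := by
    rw [← hp]; exact divX_mul_X_add p
  conv_rhs => rw [← key]
  simp only [Polynomial.map_add, Polynomial.map_mul, map_dilation, hb, map_X, map_C, map_add,
    map_mul, dilation_C, dilation_X, Algebra.smul_def,
    Polynomial.algebraMap_apply]
  ring

/-- A polynomial over `A` with zero constant coefficient which vanishes over the localization
is annihilated by dilation by any multiple of a suitable denominator. -/
theorem exists_dilation_eq_zero (p : A[X]) (h0 : constantCoeff p = 0)
    (hp : p.map (algebraMap A B) = 0) :
    ∃ b ∈ M, ∀ c, b ∣ c → dilation c p = 0 := by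
  have hq : ∀ n, ∃ b : M, b * p.coeff n = 0 := fun n => by
    rw [← IsLocalization.map_eq_zero_iff M B, ← coeff_map, hp, coeff_zero]
  choose b hb using hq
  refine ⟨∏ n ∈ p.support, (b n : A), prod_mem fun n _ => (b n).2, fun c hc => ?_⟩
  ext n
  rw [dilation_apply, comp_C_mul_X_coeff, coeff_zero]
  by_cases hn : n ∈ p.support
  · obtain ⟨d, rfl⟩ := (Finset.dvd_prod_of_mem (fun n => (b n : A)) hn).trans hc
    rcases n with _ | n
    · rw [← constantCoeff_apply, h0, zero_mul]
    · rw [pow_succ]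
      linear_combination ((b (n + 1) : A) * d) ^ n * d * hb (n + 1)
  · rw [notMem_support_iff.mp hn, zero_mul]

variable {ι κ : Type*} [Fintype ι] [Fintype κ]

theorem exists_common_denominator {P : ι → κ → A → Prop}
    (h : ∀ i j, ∃ b ∈ M, ∀ c, b ∣ c → P i j c) :
    ∃ b ∈ M, ∀ c, b ∣ c → ∀ i j, P i j c := by
  choose b hb hP using h
  refine ⟨∏ i, ∏ j, b i j, prod_mem fun i _ => prod_mem fun j _ => hb i j,
    fun c hc i j => hP i j c ?_⟩
  exact ((Finset.dvd_prod_of_mem (b i) (Finset.mem_univ j)).trans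
    (Finset.dvd_prod_of_mem (fun i => ∏ j, b i j) (Finset.mem_univ i))).trans hc

theorem Matrix.exists_lift_dilation (P : Matrix ι κ B[X]) (H : Matrix ι κ A)
    (hP : P.map constantCoeff = H.map (algebraMap A B)) :
    ∃ b ∈ M, ∀ c, b ∣ c → ∃ Q : Matrix ι κ A[X], Q.map constantCoeff = H ∧
      Q.map (mapRingHom (algebraMap A B)) = P.map (dilation (algebraMap A B c)) := by
  obtain ⟨b, hb, h⟩ := exists_common_denominator M fun i j =>
    _root_.exists_lift_dilation M (P i j) (H i j) (congrFun₂ hP i j)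
  refine ⟨b, hb, fun c hc => ?_⟩
  choose Q h0 hQ using h c hc
  exact ⟨Matrix.of Q, Matrix.ext h0, Matrix.ext hQ⟩

/-- Two matrices over `A[x]` which agree at `x = 0` and over the localization agree
after a suitable dilation. -/
theorem Matrix.exists_dilation_eq (P Q : Matrix ι κ A[X])
    (h0 : P.map constantCoeff = Q.map constantCoeff)
    (h : P.map (mapRingHom (algebraMap A B)) = Q.map (mapRingHom (algebraMap A B))) :
    ∃ b ∈ M, ∀ c, b ∣ c → P.map (dilation c) = Q.map (dilation c) := by
  obtain ⟨b, hb, hPQ⟩ := exists_common_denominator M fun i j =>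
    exists_dilation_eq_zero (B := B) M (P i j - Q i j)
      (by simpa [sub_eq_zero] using congrFun₂ h0 i j)
      (by simpa [sub_eq_zero] using congrFun₂ h i j)
  refine ⟨b, hb, fun c hc => Matrix.ext fun i j => ?_⟩
  simpa [sub_eq_zero] using hPQ c hc i j

variable [DecidableEq ι]

/-- An invertible matrix over the localization which is the identity at `x = 0` lifts, after
dilation, to an invertible matrix over `A[x]` which is the identity at `x = 0`. -/
theorem Matrix.exists_isUnit_det_lift_dilation (E : Matrix ι ι B[X]) (hE : IsUnit E.det)
    (hE0 : E.map constantCoeff = 1) :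
    ∃ b ∈ M, ∀ c, b ∣ c → ∃ Q : Matrix ι ι A[X], IsUnit Q.det ∧ Q.map constantCoeff = 1 ∧
      Q.map (mapRingHom (algebraMap A B)) = E.map (dilation (algebraMap A B c)) := by
  have hinv : E * E⁻¹ = 1 := Matrix.mul_nonsing_inv E hE
  have hinv0 : E⁻¹.map constantCoeff = 1 := by
    have := congrArg (fun N => N.map (constantCoeff (R := B))) hinv
    simpa [Matrix.map_mul, hE0] using this
  obtain ⟨b, hb, hQ⟩ := Matrix.exists_lift_dilation M E 1 (by simp [hE0])
  obtain ⟨b', hb', hQ'⟩ := Matrix.exists_lift_dilation M E⁻¹ 1 (by simp [hinv0])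
  obtain ⟨Q, hQ0, hQE⟩ := hQ (b * b') (dvd_mul_right _ _)
  obtain ⟨Q', hQ0', hQE'⟩ := hQ' (b * b') (dvd_mul_left _ _)
  obtain ⟨d, hd, hmul⟩ := Matrix.exists_dilation_eq (B := B) M (Q * Q') 1
    (by simp [Matrix.map_mul, hQ0, hQ0'])
    (by rw [Matrix.map_mul, hQE, hQE', ← Matrix.map_mul, hinv]; simp)
  refine ⟨b * b' * d, mul_mem (mul_mem hb hb') hd, ?_⟩
  rintro _ ⟨e, rfl⟩
  refine ⟨Q.map (dilation (d * e)), ?_, ?_, ?_⟩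
  · refine Matrix.isUnit_det_of_right_inverse (B := Q'.map (dilation (d * e))) ?_
    rw [← Matrix.map_mul, hmul _ (dvd_mul_right _ _)]
    simp
  · rw [← hQ0]
    ext i j
    simp only [Matrix.map_apply, constantCoeff_dilation]
  · ext1 i j
    have := congrFun₂ hQE i j
    simp only [Matrix.map_apply, coe_mapRingHom] at this ⊢
    rw [map_dilation, this, dilation_dilation, ← map_mul, mul_assoc (b * b')]

end Dilation

/-- An equivalence over the localization between a matrix over `A[x]` and its value at `x = 0`,
realized by matrices which are the identity at `x = 0`, descends to `A[x]` after dilation. -/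
theorem exists_matrixEquiv_dilation {A B : Type*} [CommRing A] [CommRing B] [Algebra A B]
    (M : Submonoid A) [IsLocalization M B] {l m : ℕ} (G : Matrix (Fin l) (Fin m) A[X])
    (E : Matrix (Fin l) (Fin l) B[X]) (W : Matrix (Fin m) (Fin m) B[X])
    (hE : IsUnit E.det) (hW : IsUnit W.det)
    (hE0 : E.map constantCoeff = 1) (hW0 : W.map constantCoeff = 1)
    (h : G.map (mapRingHom (algebraMap A B)) =
      E * (G.map constantCoeff).map (C.comp (algebraMap A B)) * W) :
    ∃ c ∈ M, MatrixEquiv (G.map (dilation c)) ((G.map constantCoeff).map C) := by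
  obtain ⟨b, hb, hU⟩ := Matrix.exists_isUnit_det_lift_dilation M E hE hE0
  obtain ⟨b', hb', hV⟩ := Matrix.exists_isUnit_det_lift_dilation M W hW hW0
  obtain ⟨U, hUdet, hU0, hUE⟩ := hU (b * b') (dvd_mul_right _ _)
  obtain ⟨V, hVdet, hV0, hVW⟩ := hV (b * b') (dvd_mul_left _ _)
  have hC (c : B) : ((G.map constantCoeff).map (C.comp (algebraMap A B))).map (dilation c) =
      ((G.map constantCoeff).map C).map (mapRingHom (algebraMap A B)) := by
    ext1 i j; simp
  have hCd (c : A) : ((G.map constantCoeff).map C).map (dilation c) =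
      (G.map constantCoeff).map C := by
    ext1 i j; simp
  obtain ⟨d, hd, hG⟩ := Matrix.exists_dilation_eq (B := B) M (G.map (dilation (b * b')))
    (U * (G.map constantCoeff).map C * V)
    (by
      rw [Matrix.map_mul, Matrix.map_mul, hU0, hV0, Matrix.one_mul, Matrix.mul_one]
      ext i j
      simp only [Matrix.map_apply, constantCoeff_dilation]
      simp)
    (by
      rw [Matrix.map_mul, Matrix.map_mul, hUE, hVW, ← hC (algebraMap A B (b * b')),
        ← Matrix.map_mul, ← Matrix.map_mul, ← h]
      ext1 i j
      simp only [Matrix.map_apply, coe_mapRingHom, map_dilation])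
  refine ⟨b * b' * d, mul_mem (mul_mem hb hb') hd, U.map (dilation d), V.map (dilation d),
    ?_, ?_, ?_⟩
  · exact RingHom.map_det (dilation d) U ▸ hUdet.map _
  · exact RingHom.map_det (dilation d) V ▸ hVdet.map _
  · have := hG d dvd_rfl
    rw [Matrix.map_mul, Matrix.map_mul, hCd] at this
    rw [← this]
    ext1 i j
    simp only [Matrix.map_apply, dilation_dilation]

theorem MatrixEquiv.map {B B' : Type*} [CommRing B] [CommRing B'] {l m : ℕ}
    {F G : Matrix (Fin l) (Fin m) B} (h : MatrixEquiv F G) (f : B →+* B') :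
    MatrixEquiv (F.map f) (G.map f) := by
  obtain ⟨U, V, hU, hV, rfl⟩ := h
  exact ⟨U.map f, V.map f, RingHom.map_det f U ▸ hU.map f, RingHom.map_det f V ▸ hV.map f,
    by rw [Matrix.map_mul, Matrix.map_mul]⟩

/-- The substitution `t ↦ t + x` from `R[t]` to `R[t][x]`. -/
noncomputable def translation (R : Type*) [CommRing R] : R[X] →+* R[X][X] :=
  eval₂RingHom (C.comp C) (C X + X)

theorem constantCoeff_translation {R : Type*} [CommRing R] (p : R[X]) :
    constantCoeff (translation R p) = p := by
  have : (constantCoeff.comp (translation R)) = RingHom.id _ := by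
    ext <;> simp [translation]
  exact RingHom.congr_fun this p

theorem map_translation {R R' : Type*} [CommRing R] [CommRing R'] (f : R →+* R') (p : R[X]) :
    (translation R p).map (mapRingHom f) = translation R' (p.map f) := by
  have : (mapRingHom (mapRingHom f)).comp (translation R) =
      (translation R').comp (mapRingHom f) := by
    ext1 <;> simp [translation, RingHom.ext_iff]
  exact RingHom.congr_fun this p

theorem dilation_translation {R : Type*} [CommRing R] (b : R) (p : R[X]) :
    dilation (C b) (translation R p) = aeval (C X + C (C b) * X : R[X][X]) p := by
  have : (dilation (C b)).comp (translation R) =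
      (aeval (C X + C (C b) * X : R[X][X])).toRingHom := by
    ext1
    · ext1 a
      simp [translation, Polynomial.algebraMap_apply]
    · simp [translation]
  exact RingHom.congr_fun this p

/-- If `F = U * F(0) * V` with `U`, `V` invertible, then `F(t + x)` is equivalent to `F(t)` by
matrices which are the identity at `x = 0`. -/
theorem exists_translation_eq {R : Type*} [CommRing R] {l m : ℕ}
    (F : Matrix (Fin l) (Fin m) R[X]) (F₀ : Matrix (Fin l) (Fin m) R)
    (h : MatrixEquiv F (F₀.map C)) :
    ∃ (E : Matrix (Fin l) (Fin l) R[X][X]) (W : Matrix (Fin m) (Fin m) R[X][X]),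
      IsUnit E.det ∧ IsUnit W.det ∧ E.map constantCoeff = 1 ∧ W.map constantCoeff = 1 ∧
      F.map (translation R) = E * F.map C * W := by
  obtain ⟨U, V, hU, hV, h⟩ := h
  have hUU := Matrix.mul_nonsing_inv U hU
  have hUU' := Matrix.nonsing_inv_mul U hU
  have hVV := Matrix.mul_nonsing_inv V hV
  have hVV' := Matrix.nonsing_inv_mul V hV
  have hconst {k : ℕ} (N : Matrix (Fin k) (Fin k) R[X]) :
      (N.map (translation R)).map constantCoeff = N ∧ (N.map C).map constantCoeff = N := by
    constructor <;> ext1 i j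
    · simp only [Matrix.map_apply, constantCoeff_translation]
    · simp
  have hdet {k : ℕ} (f : R[X] →+* R[X][X]) (N : Matrix (Fin k) (Fin k) R[X])
      (hN : IsUnit N.det) : IsUnit (N.map f).det :=
    RingHom.map_det f N ▸ hN.map f
  refine ⟨U.map (translation R) * U⁻¹.map C, V⁻¹.map C * V.map (translation R), ?_, ?_, ?_, ?_, ?_⟩
  · rw [Matrix.det_mul]
    exact (hdet _ _ hU).mul (hdet _ _ (Matrix.isUnit_nonsing_inv_det U hU))
  · rw [Matrix.det_mul]
    exact (hdet _ _ (Matrix.isUnit_nonsing_inv_det V hV)).mul (hdet _ _ hV)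
  · rw [Matrix.map_mul, (hconst U).1, (hconst _).2, hUU]
  · rw [Matrix.map_mul, (hconst V).1, (hconst _).2, hVV']
  · have hF₀ : (F₀.map C).map (translation R) = (F₀.map C).map C := by
      ext1 i j; simp [translation]
    have hinv : F₀.map C = U⁻¹ * F * V⁻¹ := by
      rw [h, Matrix.mul_assoc U, ← Matrix.mul_assoc U⁻¹, hUU', Matrix.one_mul,
        Matrix.mul_assoc, hVV, Matrix.mul_one]
    conv_lhs => rw [h, Matrix.map_mul, Matrix.map_mul, hF₀, hinv, Matrix.map_mul, Matrix.map_mul]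
    simp only [Matrix.mul_assoc]

/-- for `F ∈ R[t]^{l×m}` and a multiplicative set `S ⊆ R`,
`F(t) ∼ F(0)` over `R_S[t]` iff there is `b ∈ S` with `F(t + b·x) ∼ F(t)`
over `R[t, x]`.  Here `R[t,x]` is modelled as `Polynomial (Polynomial R)`
(with inner variable `t` and outer variable `x`). -/
theorem stmt0 {R : Type*} [CommRing R] (S : Submonoid R) {l m : ℕ}
    (F : Matrix (Fin l) (Fin m) (Polynomial R)) :
    (MatrixEquiv
        (F.map (Polynomial.map (algebraMap R (Localization S))))
        (F.map (fun f => Polynomial.C (algebraMap R (Localization S) (f.eval 0))))) ↔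
    (∃ b ∈ S, MatrixEquiv
        (F.map (fun f => Polynomial.aeval
          (Polynomial.C Polynomial.X + Polynomial.C (Polynomial.C b) * Polynomial.X :
            Polynomial (Polynomial R)) f))
        (F.map (fun f => (Polynomial.C f : Polynomial (Polynomial R))))) := by
  constructor
  · intro h
    let φ := algebraMap R (Localization S)
    algebraize [mapRingHom φ]
    have : IsLocalization (S.map (C : R →+* R[X])) (Localization S)[X] :=
      Polynomial.isLocalization S (Localization S)
    obtain ⟨E, W, hE, hW, hE0, hW0, hF⟩ := exists_translation_eq (F.map (Polynomial.map φ))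
      (F.map fun f => φ (f.eval 0)) (by rwa [Matrix.map_map])
    have hconst : (F.map (translation R)).map constantCoeff = F := by
      ext1 i j
      simp only [Matrix.map_apply, constantCoeff_translation]
    obtain ⟨_, ⟨b, hb, rfl⟩, hc⟩ := exists_matrixEquiv_dilation (B := (Localization S)[X])
      (S.map (C : R →+* R[X])) (F.map (translation R)) E W hE hW hE0 hW0 (by
        rw [hconst]
        refine Eq.trans ?_ hF
        ext1 i j
        exact map_translation φ (F i j))
    refine ⟨b, hb, ?_⟩
    rw [hconst, Matrix.map_map] at hc
    convert hc using 2
    ext1 f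
    exact (dilation_translation b f).symm
  · rintro ⟨b, hb, h⟩
    let φ := algebraMap R (Localization S)
    let ψ : R[X][X] →+* (Localization S)[X] :=
      eval₂RingHom (C.comp (φ.comp constantCoeff)) (C (IsLocalization.mk' _ 1 ⟨b, hb⟩) * X)
    have hb1 : φ b * IsLocalization.mk' (Localization S) 1 ⟨b, hb⟩ = 1 := 
      (IsLocalization.mk'_spec' (Localization S) (1 : R) ⟨b, hb⟩).trans (map_one _)
    have hψ : ψ.comp (aeval (C X + C (C b) * X : R[X][X])).toRingHom = mapRingHom φ := by
      ext1
      · ext1 a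
        simp [ψ, Polynomial.algebraMap_apply]
      · simp [ψ, ← mul_assoc, ← C_mul, hb1]
    convert h.map ψ using 1
    · ext1 i j
      exact (RingHom.congr_fun hψ (F i j)).symm
    · ext1 i j
      simp [ψ, φ, coeff_zero_eq_eval_zero]
end

section
/- Let K be a field, A = K[x_1, ..., x_n], p ∈ K[x_1] an irreducible polynomial, s_1 ≤ ... ≤ s_k ≤ s nonnegative integers, U ∈ GL_l(A), and let B = diag(p^{s_1}, ..., p^{s_k}, p^s, ..., p^s) · U · diag(1, ..., 1, p, ..., p) ∈ A^{l×l}, where the second diagonal matrix has exactly k entries equal to 1 and l − k entries equal to p. If for each i = 1, ..., k the gcd of all i × i minors of B is (an associate of) p^{s_1 + ... + s_i} and the i × i reduced minors of B generate the unit ideal A (i.e. J_i(B) = A), then B is equivalent to diag(p^{s_1}, ..., p^{s_k}, p^{s+1}, ..., p^{s+1}). -/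
/-- The set of all `i × i` minors of a matrix. -/
def minorsSet {R : Type*} [CommRing R] {l m : ℕ} (i : ℕ)
    (F : Matrix (Fin l) (Fin m) R) : Set R :=
  {a | ∃ (f : Fin i → Fin l) (g : Fin i → Fin m),
      StrictMono f ∧ StrictMono g ∧ a = (F.submatrix f g).det}

/-- `d` is a greatest common divisor of the set `s`. -/
def IsGcdOf {R : Type*} [CommRing R] (d : R) (s : Set R) : Prop :=
  (∀ a ∈ s, d ∣ a) ∧ ∀ c : R, (∀ a ∈ s, c ∣ a) → c ∣ d

/-- The image of a univariate polynomial `p ∈ K[x₁]` in `A = K[x₁, …, x_{n+1}]`,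
sending the variable to `x₁` (the variable of index `0`). -/
noncomputable def polyImage {K : Type*} [CommRing K] (n : ℕ) (p : Polynomial K) :
    MvPolynomial (Fin (n + 1)) K :=
  Polynomial.aeval (MvPolynomial.X 0) p

open Matrix

/-- An invertible matrix whose lower-left block is divisible by `q`. -/
structure IsRelParabolic {A ι κ : Type*} [CommRing A] [Fintype ι] [Fintype κ] [DecidableEq ι]
    [DecidableEq κ] (q : A) (G : Matrix (ι ⊕ κ) (ι ⊕ κ) A) : Prop where
  isUnit_det : IsUnit G.det
  dvd : ∀ i j, q ∣ G (Sum.inr i) (Sum.inl j)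

/-- A row which remains unimodular after its right block is multiplied by `q`. -/
def RelUnimodular {A ι κ : Type*} [CommRing A] [Fintype ι] [Fintype κ] (q : A)
    (u : ι ⊕ κ → A) : Prop :=
  ∃ v : ι ⊕ κ → A, (∀ j, q ∣ v (Sum.inr j)) ∧ u ⬝ᵥ v = 1

/-- A row which occurs as the row of index `i₀` of a matrix satisfying `IsRelParabolic q`. -/
def Completable {A ι κ : Type*} [CommRing A] [Fintype ι] [Fintype κ] [DecidableEq ι]
    [DecidableEq κ] (q : A) (i₀ : ι) (u : ι ⊕ κ → A) : Prop :=
  ∃ G : Matrix (ι ⊕ κ) (ι ⊕ κ) A, IsRelParabolic q G ∧ G (Sum.inl i₀) = u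

lemma RelUnimodular.map {A A' ι κ : Type*} [CommRing A] [CommRing A'] [Fintype ι] [Fintype κ]
    {q : A} {u : ι ⊕ κ → A} (hu : RelUnimodular q u) (f : A →+* A') :
    RelUnimodular (f q) (fun i => f (u i)) := by
  obtain ⟨v, hv, huv⟩ := hu
  refine ⟨fun i => f (v i), fun j => map_dvd f (hv j), ?_⟩
  have := congrArg f huv
  rw [map_one, dotProduct, map_sum] at this
  simpa [dotProduct] using this

section Basic

variable {A A' ι κ : Type*} [CommRing A] [CommRing A'] [Fintype ι] [Fintype κ] [DecidableEq ι]
  [DecidableEq κ] {q : A}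

lemma IsRelParabolic.map {G : Matrix (ι ⊕ κ) (ι ⊕ κ) A} (hG : IsRelParabolic q G) (f : A →+* A') :
    IsRelParabolic (f q) (G.map f) where
  isUnit_det := by
    have := hG.isUnit_det.map f
    rwa [RingHom.map_det] at this
  dvd i j := map_dvd f (hG.dvd i j)

lemma IsRelParabolic.mul {G H : Matrix (ι ⊕ κ) (ι ⊕ κ) A} (hG : IsRelParabolic q G)
    (hH : IsRelParabolic q H) : IsRelParabolic q (G * H) where
  isUnit_det := by
    rw [det_mul]
    exact hG.isUnit_det.mul hH.isUnit_det
  dvd i j := by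
    rw [mul_apply, Fintype.sum_sum_type]
    exact dvd_add (Finset.dvd_sum fun x _ => (hG.dvd i x).mul_right _)
      (Finset.dvd_sum fun x _ => (hH.dvd x j).mul_left _)

lemma IsRelParabolic.inv {G : Matrix (ι ⊕ κ) (ι ⊕ κ) A} (hG : IsRelParabolic q G) :
    IsRelParabolic q G⁻¹ where
  isUnit_det := isUnit_nonsing_inv_det G hG.isUnit_det
  dvd i j := by
    let f := Ideal.Quotient.mk (Ideal.span {q})
    have hf : ∀ a, f a = 0 ↔ q ∣ a := fun a => by
      rw [Ideal.Quotient.eq_zero_iff_mem, Ideal.mem_span_singleton]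
    have h : G.map f * (G⁻¹).map f = 1 := by
      rw [← Matrix.map_mul, mul_nonsing_inv _ hG.isUnit_det, Matrix.map_one _ f.map_zero f.map_one]
    have h21 : (G.map f).toBlocks₂₁ = 0 := by
      ext a b
      exact (hf _).2 (hG.dvd a b)
    rw [← fromBlocks_toBlocks (G.map f), ← fromBlocks_toBlocks ((G⁻¹).map f), fromBlocks_multiply,
      ← fromBlocks_one, fromBlocks_inj, h21] at h
    obtain ⟨-, -, h1, h2⟩ := h
    rw [Matrix.zero_mul, zero_add] at h1 h2
    have h3 : ((G⁻¹).map f).toBlocks₂₁ = 0 := by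
      rw [← Matrix.one_mul ((G⁻¹).map f).toBlocks₂₁, ← mul_eq_one_comm.1 h2, Matrix.mul_assoc, h1,
        Matrix.mul_zero]
    exact (hf _).1 (congrFun (congrFun h3 i) j)

lemma Completable.map {i₀ : ι} {u : ι ⊕ κ → A} (hu : Completable q i₀ u) (f : A →+* A') :
    Completable (f q) i₀ (fun i => f (u i)) := by
  obtain ⟨G, hG, rfl⟩ := hu
  exact ⟨G.map f, hG.map f, rfl⟩

lemma Completable.vecMul {i₀ : ι} {u : ι ⊕ κ → A} (hu : Completable q i₀ u)
    {G : Matrix (ι ⊕ κ) (ι ⊕ κ) A} (hG : IsRelParabolic q G) : Completable q i₀ (u ᵥ* G) := by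
  obtain ⟨H, hH, rfl⟩ := hu
  exact ⟨H * G, hH.mul hG, by ext; rfl⟩

end Basic

section PID

variable {R : Type*} [CommRing R] [IsDomain R] [IsPrincipalIdealRing R]

/-- Over a principal ideal domain every row is a multiple of a row of an invertible matrix. -/
lemma exists_eq_smul_row {ι : Type*} [Fintype ι] [DecidableEq ι] (i₀ : ι) (a : ι → R) :
    ∃ (G : Matrix ι ι R) (g : R), IsUnit G.det ∧ a = g • G i₀ := by
  by_cases ha : a = 0
  · exact ⟨1, 0, by simp, by simp [ha]⟩
  obtain ⟨n, snf⟩ := Submodule.smithNormalForm (Pi.basisFun R ι) (Submodule.span R {a})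
  have hn : n = 1 := by
    have h1 := Module.finrank_eq_card_basis snf.bN
    rw [← (LinearEquiv.toSpanNonzeroSingleton R (ι → R) a ha).finrank_eq] at h1
    simpa using h1.symm
  subst hn
  have ham : a ∈ Submodule.span R {a} := Submodule.mem_span_singleton_self a
  have h := congrArg Subtype.val (snf.bN.sum_repr ⟨a, ham⟩)
  simp only [Finset.univ_unique, Fin.default_eq_zero, Finset.sum_singleton, Submodule.coe_smul,
    snf.snf] at h
  let b := snf.bM.reindex (Equiv.swap (snf.f 0) i₀)
  have hb : b i₀ = snf.bM (snf.f 0) := by simp [b]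
  refine ⟨((Pi.basisFun R ι).toMatrix b)ᵀ, snf.bN.repr ⟨a, ham⟩ 0 * snf.a 0, ?_, ?_⟩
  · rw [det_transpose]
    exact isUnit_det_of_right_inverse ((Pi.basisFun R ι).toMatrix_mul_toMatrix_flip b)
  · have hrow : ((Pi.basisFun R ι).toMatrix b)ᵀ i₀ = snf.bM (snf.f 0) := by
      ext j
      simp [Module.Basis.toMatrix, hb]
    rw [mul_smul, hrow]
    exact h.symm

/-- Over a principal ideal domain every unimodular row is a row of an invertible matrix. -/
lemma exists_row_eq {ι : Type*} [Fintype ι] [DecidableEq ι] (i₀ : ι) (a v : ι → R)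
    (h : a ⬝ᵥ v = 1) : ∃ G : Matrix ι ι R, IsUnit G.det ∧ G i₀ = a := by
  obtain ⟨G, g, hG, ha⟩ := exists_eq_smul_row i₀ a
  have hg : IsUnit g := by
    rw [ha, smul_dotProduct, smul_eq_mul] at h
    exact IsUnit.of_mul_eq_one _ h
  refine ⟨G.updateRow i₀ (g • G i₀), ?_, by rw [updateRow_self, ha]⟩
  rw [det_updateRow_smul, updateRow_eq_self]
  exact hg.mul hG

theorem RelUnimodular.completable_of_isPrincipalIdealRing {ι κ : Type*} [Fintype ι] [Fintype κ]
    [DecidableEq ι] [DecidableEq κ] {q : R} {u : ι ⊕ κ → R} (hu : RelUnimodular q u) (i₀ : ι) :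
    Completable q i₀ u := by
  obtain ⟨v, hv, huv⟩ := hu
  rcases isEmpty_or_nonempty κ with hκ | ⟨⟨j₀⟩⟩
  · obtain ⟨G, hG, hG'⟩ := exists_row_eq (Sum.inl i₀) u v huv
    exact ⟨G, ⟨hG, fun i => hκ.elim i⟩, hG'⟩
  obtain ⟨G, g, hG, hg⟩ := exists_eq_smul_row i₀ fun i => u (Sum.inl i)
  obtain ⟨H, h, hH, hh⟩ := exists_eq_smul_row j₀ fun i => u (Sum.inr i)
  obtain ⟨s, t, hst⟩ : ∃ s t, g * s + h * (q * t) = 1 := by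
    choose w hw using hv
    refine ⟨G i₀ ⬝ᵥ fun i => v (Sum.inl i), H j₀ ⬝ᵥ w, ?_⟩
    rw [← huv, dotProduct, dotProduct, dotProduct, Fintype.sum_sum_type]
    simp only [hw, Finset.mul_sum]
    congr 1 <;> refine Finset.sum_congr rfl fun i _ => ?_
    · rw [congrFun hg i, Pi.smul_apply, smul_eq_mul]; ring
    · rw [congrFun hh i, Pi.smul_apply, smul_eq_mul]; ring
  let Z : Matrix (ι ⊕ κ) (ι ⊕ κ) R :=
    fromBlocks (diagonal (Function.update 1 i₀ g)) (single i₀ j₀ h)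
      (single j₀ i₀ (-(q * t))) (diagonal (Function.update 1 j₀ s))
  let Z' : Matrix (ι ⊕ κ) (ι ⊕ κ) R :=
    fromBlocks (diagonal (Function.update 1 i₀ s)) (single i₀ j₀ (-h))
      (single j₀ i₀ (q * t)) (diagonal (Function.update 1 j₀ g))
  have hZ : Z * Z' = 1 := by
    rw [fromBlocks_multiply, ← fromBlocks_one, fromBlocks_inj]
    refine ⟨?_, ?_, ?_, ?_⟩
    · rw [diagonal_mul_diagonal, single_mul_single_same, ← diagonal_one]
      ext i j
      by_cases hi : i = i₀ <;> by_cases hj : j = i₀ <;>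
        simp [diagonal_apply, hi, hj, Ne.symm, hst]
    · ext i j
      by_cases hi : i = i₀ <;> by_cases hj : j = j₀ <;>
        simp [mul_diagonal, hi, hj, Ne.symm, mul_comm]
    · ext i j
      by_cases hi : i = j₀ <;> by_cases hj : j = i₀ <;>
        simp [mul_diagonal, hi, hj, Ne.symm, mul_comm]
    · rw [diagonal_mul_diagonal, single_mul_single_same, ← diagonal_one]
      ext i j
      by_cases hi : i = j₀ <;> by_cases hj : j = j₀ <;>
        simp [diagonal_apply, hi, hj, Ne.symm]
      linear_combination hst
  refine ⟨Z * fromBlocks G 0 0 H, IsRelParabolic.mul ⟨isUnit_det_of_right_inverse hZ, fun i j => ?_⟩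
    ⟨?_, fun i j => by simp⟩, ?_⟩
  · simp only [Z, fromBlocks_apply₂₁, single_apply]
    split_ifs
    · exact (dvd_mul_right _ _).neg_right
    · exact dvd_zero _
  · rw [det_fromBlocks_zero₂₁]
    exact hG.mul hH
  · ext (i | i)
    · rw [congrFun hg i]
      simp [Z, fromBlocks_multiply, diagonal_mul]
    · rw [congrFun hh i]
      simp [Z, fromBlocks_multiply]

end PID

section MonicLocalization

open Polynomial

/-- The monic polynomials. -/
def monics (R : Type*) [CommRing R] : Submonoid R[X] where
  carrier := {f | f.Monic}
  one_mem' := monic_one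
  mul_mem' := Monic.mul

variable {R : Type*} [CommRing R]

lemma mem_monics {f : R[X]} : f ∈ monics R ↔ f.Monic := Iff.rfl

lemma eq_map_C_of_forall_not_monic {P : Ideal R[X]} {p : Ideal R} [p.IsMaximal]
    (hp : p = P.comap C) (hP : ∀ f ∈ P, ¬ f.Monic) : P = p.map C := by
  refine le_antisymm (fun f hf => ?_) (Ideal.map_le_iff_le_comap.2 hp.le)
  let π := Ideal.Quotient.mk p
  let : Field (R ⧸ p) := Ideal.Quotient.field p
  rw [Ideal.mem_map_C_iff]
  by_contra! hcoeff
  have hf0 : f.map π ≠ 0 := by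
    obtain ⟨n, hn⟩ := hcoeff
    intro h
    apply hn
    rw [← Ideal.Quotient.eq_zero_iff_mem]
    simpa using congrArg (fun g => g.coeff n) h
  obtain ⟨c, hc⟩ := Ideal.Quotient.mk_surjective (I := p) (f.map π).leadingCoeff⁻¹
  have hmon : ((C c * f).map π).Monic := by
    rw [Polynomial.map_mul, map_C, show π c = _ from hc, mul_comm]
    exact monic_mul_leadingCoeff_inv hf0
  obtain ⟨g, hg, -, hgm⟩ := lifts_and_natDegree_eq_and_monic
    ((mem_lifts _).2 ⟨C c * f, rfl⟩) hmon
  refine hP g ?_ hgm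
  have h1 : g - C c * f ∈ p.map C := by
    rw [Ideal.mem_map_C_iff]
    intro n
    rw [← Ideal.Quotient.eq_zero_iff_mem, coeff_sub, map_sub, ← coeff_map, ← coeff_map]
    exact sub_eq_zero.2 (congrArg (fun g => g.coeff n) hg)
  have h2 : p.map C ≤ P := Ideal.map_le_iff_le_comap.2 hp.le
  simpa using P.add_mem (h2 h1) (P.mul_mem_left (C c) hf)

variable [IsDomain R]

lemma monics_le_nonZeroDivisors : monics R ≤ nonZeroDivisors R[X] :=
  fun _ hf => mem_nonZeroDivisors_of_ne_zero (mem_monics.1 hf).ne_zero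

instance : IsDomain (Localization (monics R)) :=
  IsLocalization.isDomain_localization monics_le_nonZeroDivisors

lemma isPrincipal_of_comap_C_eq_bot [UniqueFactorizationMonoid R] {P : Ideal R[X]} [P.IsPrime]
    (hP : P.comap C = ⊥) : P.IsPrincipal := by
  classical
  by_cases hbot : P = ⊥
  · rw [hbot]; infer_instance
  obtain ⟨f, hfP, hf⟩ := Ideal.IsPrime.exists_mem_prime_of_ne_bot ‹P.IsPrime› hbot
  have hC : ∀ r, C r ∈ P → r = 0 := fun r hr => by
    have : r ∈ P.comap C := hr
    rwa [hP] at this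
  have hdeg : f.natDegree ≠ 0 := fun h0 => by
    rw [eq_C_of_natDegree_eq_zero h0] at hfP
    apply hf.ne_zero
    rw [eq_C_of_natDegree_eq_zero h0, hC _ hfP, C_0]
  have hprim : f.IsPrimitive := hf.irreducible.isPrimitive hdeg
  let : NormalizedGCDMonoid R := Nonempty.some inferInstance
  let K := FractionRing R
  have hirr : Irreducible (f.map (algebraMap R K)) :=
    hprim.irreducible_iff_irreducible_map_fraction_map.1 hf.irreducible
  refine ⟨⟨f, le_antisymm (fun g hg => ?_) ((Ideal.span_singleton_le_iff_mem _).2 hfP)⟩⟩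
  rw [Ideal.submodule_span_eq, Ideal.mem_span_singleton]
  by_contra hfg
  have hndvd : ¬ f.map (algebraMap R K) ∣ g.map (algebraMap R K) := fun h =>
    hfg (hprim.dvd_of_fraction_map_dvd_fraction_map h)
  obtain ⟨a, b, hab⟩ := (hirr.coprime_iff_not_dvd).2 hndvd
  obtain ⟨r, hr, ha⟩ := IsLocalization.integerNormalization_spec (nonZeroDivisors R) a
  obtain ⟨t, ht, hb⟩ := IsLocalization.integerNormalization_spec (nonZeroDivisors R) b
  set a' := IsLocalization.integerNormalization (nonZeroDivisors R) a
  set b' := IsLocalization.integerNormalization (nonZeroDivisors R) b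
  have hrt : C (r * t) = C t * a' * f + C r * b' * g := by
    apply map_injective (algebraMap R K) (IsFractionRing.injective R K)
    simp only [Polynomial.map_mul, Polynomial.map_add, map_C, ha, hb, map_mul, Algebra.smul_def,
      Polynomial.algebraMap_apply]
    linear_combination (- C (algebraMap R K r) * C (algebraMap R K t)) * hab
  refine nonZeroDivisors.ne_zero (mul_mem hr ht) (hC _ ?_)
  rw [hrt]
  exact P.add_mem (P.mul_mem_left _ hfP) (P.mul_mem_left _ hg)

instance [IsPrincipalIdealRing R] : IsPrincipalIdealRing (Localization (monics R)) := by
  refine IsPrincipalIdealRing.of_prime fun P hP => ?_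
  let P' := P.comap (algebraMap R[X] (Localization (monics R)))
  have hP' : P'.IsPrime := hP.comap _
  have hmon : ∀ f ∈ P', ¬ f.Monic := fun f hf hfm =>
    hP.ne_top (Ideal.eq_top_of_isUnit_mem _ hf
      (IsLocalization.map_units (Localization (monics R)) (⟨f, hfm⟩ : monics R)))
  have key : P'.IsPrincipal := by
    by_cases h : P'.comap C = ⊥
    · exact isPrincipal_of_comap_C_eq_bot h
    · have : (P'.comap C).IsPrime := hP'.comap _
      have : (P'.comap C).IsMaximal := IsPrime.to_maximal_ideal h
      rw [eq_map_C_of_forall_not_monic rfl hmon]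
      obtain ⟨⟨π, hπ⟩⟩ := IsPrincipalIdealRing.principal (P'.comap C)
      rw [hπ, Ideal.submodule_span_eq, Ideal.map_span, Set.image_singleton]
      exact ⟨⟨_, rfl⟩⟩
  rw [← IsLocalization.map_under (monics R) (Localization (monics R)) P]
  obtain ⟨⟨f, hf⟩⟩ := key
  change (Ideal.map _ P').IsPrincipal
  rw [hf, Ideal.submodule_span_eq, Ideal.map_span, Set.image_singleton]
  exact ⟨⟨_, rfl⟩⟩

end MonicLocalization

section Horrocks

open Polynomial IsLocalRing

variable {R : Type*} [CommRing R]

local notation "𝒯" => Localization (monics R)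

lemma isUnit_algebraMap_of_monic {f : R[X]} (hf : f.Monic) : IsUnit (algebraMap R[X] 𝒯 f) :=
  IsLocalization.map_units 𝒯 (⟨f, hf⟩ : monics R)

lemma exists_monic_mul_eq (t : 𝒯) :
    ∃ f g : R[X], f.Monic ∧ t * algebraMap R[X] 𝒯 f = algebraMap R[X] 𝒯 g := by
  obtain ⟨⟨g, f⟩, h⟩ := IsLocalization.surj (monics R) t
  exact ⟨f, g, f.2, h⟩

variable [IsLocalRing R]

local notation "𝔪" => maximalIdeal R

local notation "ℱ" => FractionRing (ResidueField R)[X]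

/-- Reduction modulo the maximal ideal of the ring of fractions with monic denominators. -/
noncomputable def monicResidue (R : Type*) [CommRing R] [IsLocalRing R] :
    Localization (monics R) →+* FractionRing (ResidueField R)[X] :=
  IsLocalization.lift (M := monics R)
    (g := (algebraMap (ResidueField R)[X] (FractionRing (ResidueField R)[X])).comp
      (mapRingHom (residue R))) fun f => by
    have hf : (f : R[X]).Monic := f.2
    refine IsUnit.mk0 _ ?_
    rw [RingHom.comp_apply, Ne, FaithfulSMul.algebraMap_eq_zero_iff]
    exact (hf.map (residue R)).ne_zero

lemma monicResidue_algebraMap (f : R[X]) :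
    monicResidue R (algebraMap R[X] 𝒯 f) =
      algebraMap (ResidueField R)[X] ℱ (f.map (residue R)) :=
  IsLocalization.lift_eq _ f

lemma mem_map_C_iff_map_residue {f : R[X]} : f ∈ Ideal.map C 𝔪 ↔ f.map (residue R) = 0 := by
  rw [Ideal.mem_map_C_iff, Polynomial.ext_iff]
  simp

lemma exists_isUnit_monicResidue_eq {d : ℱ} (hd : d ≠ 0) :
    ∃ t : 𝒯, IsUnit t ∧ monicResidue R t = d := by
  have key : ∀ f : (ResidueField R)[X], f ≠ 0 →
      ∃ t : 𝒯, IsUnit t ∧ monicResidue R t = algebraMap (ResidueField R)[X] ℱ f := by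
    intro f hf
    obtain ⟨g, hg, -, hgm⟩ := lifts_and_natDegree_eq_and_monic (f := residue R)
      (p := f * C f.leadingCoeff⁻¹)
      ((mem_lifts _).2 (map_surjective _ residue_surjective _)) (monic_mul_leadingCoeff_inv hf)
    obtain ⟨c, hc⟩ := residue_surjective (R := R) f.leadingCoeff
    have hcu : IsUnit c := by
      by_contra h
      rw [← mem_nonunits_iff, ← mem_maximalIdeal, ← residue_eq_zero_iff, hc] at h
      exact hf (leadingCoeff_eq_zero.1 h)
    refine ⟨algebraMap R[X] 𝒯 (C c * g), ?_, ?_⟩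
    · rw [map_mul]
      exact ((hcu.map C).map _).mul (isUnit_algebraMap_of_monic hgm)
    · rw [monicResidue_algebraMap, Polynomial.map_mul, hg, map_C, hc, mul_comm, mul_assoc, ← C_mul,
        inv_mul_cancel₀ (leadingCoeff_ne_zero.2 hf), C_1, mul_one]
  obtain ⟨f, g, hg, rfl⟩ := IsFractionRing.div_surjective (A := (ResidueField R)[X]) d
  obtain ⟨t, ht, htf⟩ := key f (by rintro rfl; simp at hd)
  obtain ⟨s, ⟨s, rfl⟩, hsg⟩ := key g (nonZeroDivisors.ne_zero hg)
  refine ⟨t * ↑s⁻¹, ht.mul s⁻¹.isUnit, ?_⟩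
  rw [map_mul, htf, ← hsg, div_eq_mul_inv]
  congr 1
  refine eq_inv_of_mul_eq_one_left ?_
  rw [← map_mul, Units.inv_mul, map_one]

lemma monicResidue_surjective : Function.Surjective (monicResidue R) := fun d => by
  by_cases hd : d = 0
  · exact ⟨0, by rw [hd, map_zero]⟩
  · obtain ⟨t, -, ht⟩ := exists_isUnit_monicResidue_eq hd
    exact ⟨t, ht⟩

lemma mem_smul_top_of_monicResidue_eq_zero {t : 𝒯} (ht : monicResidue R t = 0) :
    t ∈ (𝔪 • ⊤ : Submodule R 𝒯) := by
  obtain ⟨f, g, hf, h⟩ := exists_monic_mul_eq t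
  have hg : g ∈ Ideal.map C 𝔪 := by
    have := congrArg (monicResidue R) h
    rw [map_mul, ht, zero_mul, monicResidue_algebraMap, eq_comm,
      FaithfulSMul.algebraMap_eq_zero_iff] at this
    exact mem_map_C_iff_map_residue.2 this
  obtain ⟨w, hw⟩ := (isUnit_algebraMap_of_monic hf).exists_right_inv
  have htg : t = algebraMap R[X] 𝒯 g * w := by rw [← h, mul_assoc, hw, mul_one]
  rw [htg, g.as_sum_range_C_mul_X_pow, map_sum, Finset.sum_mul]
  refine Submodule.sum_mem _ fun n _ => ?_
  have : algebraMap R[X] 𝒯 (C (g.coeff n) * X ^ n) * w =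
      g.coeff n • (algebraMap R[X] 𝒯 (X ^ n) * w) := by
    rw [map_mul, mul_assoc, Algebra.smul_def, IsScalarTower.algebraMap_apply R R[X] 𝒯,
      Polynomial.algebraMap_eq]
  rw [this]
  exact Submodule.smul_mem_smul (Ideal.mem_map_C_iff.1 hg n) trivial

lemma exists_lift_of_det_ne_zero {n : Type*} [Fintype n] [DecidableEq n] (H : Matrix n n ℱ)
    (hH : H.det ≠ 0) : ∃ H' : Matrix n n 𝒯, IsUnit H'.det ∧ H'.map (monicResidue R) = H := by
  refine diagonal_transvection_induction_of_det_ne_zero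
    (fun H => ∃ H' : Matrix n n 𝒯, IsUnit H'.det ∧ H'.map (monicResidue R) = H) H hH ?_ ?_ ?_
  · intro D hD
    rw [det_diagonal, Finset.prod_ne_zero_iff] at hD
    choose d hd hdD using fun i => exists_isUnit_monicResidue_eq (hD i (Finset.mem_univ i))
    refine ⟨diagonal d, ?_, ?_⟩
    · rw [det_diagonal]
      exact IsUnit.prod_univ_iff.2 hd
    · rw [diagonal_map (map_zero _)]
      simp [hdD]
  · intro t
    obtain ⟨c, hc⟩ := monicResidue_surjective t.c
    refine ⟨transvection t.i t.j c, ?_, ?_⟩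
    · rw [det_transvection_of_ne _ _ t.hij]
      exact isUnit_one
    · rw [transvection, Matrix.map_add _ (map_add _), Matrix.map_one _ (map_zero _) (map_one _),
        map_single, hc]
      rfl
  · rintro A B - - ⟨A', hA, rfl⟩ ⟨B', hB, rfl⟩
    exact ⟨A' * B', by rw [det_mul]; exact hA.mul hB, Matrix.map_mul⟩

/-- An invertible matrix with a row of the identity matrix lifts to a matrix with the same row. -/
lemma exists_lift_of_row_eq {n : Type*} [Fintype n] [DecidableEq n] (i₀ : n) (H : Matrix n n ℱ)
    (hH : H.det ≠ 0) (hrow : H i₀ = Pi.single i₀ 1) :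
    ∃ H' : Matrix n n 𝒯, IsUnit H'.det ∧ H'.map (monicResidue R) = H ∧
      H' i₀ = Pi.single i₀ 1 := by
  let e : {i // i = i₀} ⊕ {i // ¬ i = i₀} ≃ n := Equiv.sumCompl (· = i₀)
  have h12 : (H.submatrix e e).toBlocks₁₂ = 0 := by
    ext ⟨i, rfl⟩ j
    simp [toBlocks₁₂, e, hrow, j.2]
  have h11 : (H.submatrix e e).toBlocks₁₁ = 1 := by
    ext ⟨i, rfl⟩ ⟨j, rfl⟩
    simp [toBlocks₁₁, e, hrow]
  have hdet : (H.submatrix e e).toBlocks₂₂.det ≠ 0 := by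
    rwa [← det_submatrix_equiv_self e, ← fromBlocks_toBlocks (H.submatrix e e), h12,
      det_fromBlocks_zero₁₂, h11, det_one, one_mul] at hH
  obtain ⟨D, hD, hDH⟩ := exists_lift_of_det_ne_zero _ hdet
  choose c hc using fun i j => monicResidue_surjective ((H.submatrix e e).toBlocks₂₁ i j)
  refine ⟨(fromBlocks 1 0 (of c) D).submatrix e.symm e.symm, ?_, ?_, ?_⟩
  · rw [det_submatrix_equiv_self, det_fromBlocks_zero₁₂, det_one, one_mul]
    exact hD
  · rw [← submatrix_map, fromBlocks_map, hDH, Matrix.map_zero _ (map_zero _),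
      Matrix.map_one _ (map_zero _) (map_one _), ← h12, ← h11,
      show (of c).map (monicResidue R) = (H.submatrix e e).toBlocks₂₁ by ext i j; exact hc i j,
      fromBlocks_toBlocks]
    simp
  · ext j
    obtain ⟨j, rfl⟩ := e.surjective j
    have hi : e.symm i₀ = Sum.inl ⟨i₀, rfl⟩ := by simp [e]
    rw [submatrix_apply, hi, Equiv.symm_apply_apply]
    rcases j with ⟨j, rfl⟩ | j
    · simp [e]
    · simp [e, j.2]

end Horrocks

lemma det_one_sub_sub_one_mem {S n : Type*} [CommRing S] [Fintype n] [DecidableEq n] {I : Ideal S}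
    {N : Matrix n n S} (hN : ∀ i j, N i j ∈ I) : (1 - N).det - 1 ∈ I := by
  rw [← Ideal.Quotient.eq_zero_iff_mem, map_sub, map_one, RingHom.map_det, sub_eq_zero,
    RingHom.mapMatrix_apply, Matrix.map_sub _ (map_sub _),
    Matrix.map_one _ (map_zero _) (map_one _),
    show N.map (Ideal.Quotient.mk I) = 0 by
      ext i j; exact Ideal.Quotient.eq_zero_iff_mem.2 (hN i j), sub_zero, det_one]

section Horrocks

open Polynomial IsLocalRing

variable {R : Type*} [CommRing R]

local notation "𝒯" => Localization (monics R)

/-- The fractions with monic denominator whose numerator has degree at most that of the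
denominator. -/
def properFractions (R : Type*) [CommRing R] : Subalgebra R (Localization (monics R)) where
  carrier := {t | ∃ f g : R[X], f.Monic ∧ g.degree ≤ f.degree ∧
    t * algebraMap R[X] (Localization (monics R)) f = algebraMap R[X] (Localization (monics R)) g}
  mul_mem' := by
    rintro t t' ⟨f, g, hf, hg, h⟩ ⟨f', g', hf', hg', h'⟩
    refine ⟨f * f', g * g', hf.mul hf', ?_, ?_⟩
    · rw [hf'.degree_mul]
      exact (degree_mul_le _ _).trans (add_le_add hg hg')
    · rw [map_mul, map_mul, ← h, ← h']
      ring
  add_mem' := by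
    rintro t t' ⟨f, g, hf, hg, h⟩ ⟨f', g', hf', hg', h'⟩
    refine ⟨f * f', g * f' + g' * f, hf.mul hf', ?_, ?_⟩
    · refine (degree_add_le _ _).trans (max_le ?_ ?_)
      · rw [hf'.degree_mul, hf'.degree_mul]
        gcongr
      · rw [mul_comm f, hf.degree_mul, hf.degree_mul]
        gcongr
    · rw [map_add, map_mul, map_mul, map_mul, ← h, ← h']
      ring
  algebraMap_mem' r := by
    refine ⟨1, C r, monic_one, ?_, ?_⟩
    · rcases subsingleton_or_nontrivial R
      · exact (congrArg degree (Subsingleton.elim _ _)).le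
      · exact degree_C_le.trans degree_one.ge
    · rw [map_one, mul_one, IsScalarTower.algebraMap_apply R R[X], Polynomial.algebraMap_eq]

local notation "ℬ" => properFractions R

lemma exists_eq_algebraMap_add (t : 𝒯) :
    ∃ (a : R[X]) (b : ℬ), t = algebraMap R[X] 𝒯 a + b := by
  nontriviality R
  obtain ⟨f, g, hf, h⟩ := exists_monic_mul_eq t
  refine ⟨g /ₘ f, ⟨t - algebraMap R[X] 𝒯 (g /ₘ f), f, g %ₘ f, hf,
    (degree_modByMonic_lt g hf).le, ?_⟩, by simp⟩
  rw [sub_mul, h, ← map_mul, ← map_sub, modByMonic_eq_sub_mul_div, mul_comm]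

variable [IsLocalRing R]

local notation "𝔪" => maximalIdeal R

/-- The proper fractions whose numerator can be chosen with coefficients in the maximal ideal. -/
def smallFractions (R : Type*) [CommRing R] [IsLocalRing R] : Ideal (properFractions R) where
  carrier := {t | ∃ f g : R[X], f.Monic ∧ g.degree ≤ f.degree ∧ g.map (residue R) = 0 ∧
    (t : Localization (monics R)) * algebraMap R[X] (Localization (monics R)) f =
      algebraMap R[X] (Localization (monics R)) g}
  zero_mem' := ⟨1, 0, monic_one, by simp, by simp, by simp⟩
  add_mem' := by
    rintro t t' ⟨f, g, hf, hg, hgm, h⟩ ⟨f', g', hf', hg', hgm', h'⟩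
    refine ⟨f * f', g * f' + g' * f, hf.mul hf', ?_, by simp [hgm, hgm'], ?_⟩
    · refine (degree_add_le _ _).trans (max_le ?_ ?_)
      · rw [hf'.degree_mul, hf'.degree_mul]
        gcongr
      · rw [mul_comm f, hf.degree_mul, hf.degree_mul]
        gcongr
    · rw [map_add, map_mul, map_mul, map_mul, ← h, ← h', AddMemClass.coe_add]
      ring
  smul_mem' := by
    rintro t t' ⟨f', g', hf', hg', hgm', h'⟩
    obtain ⟨f, g, hf, hg, h⟩ := t.2
    refine ⟨f * f', g * g', hf.mul hf', ?_, by simp [hgm'], ?_⟩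
    · rw [hf'.degree_mul]
      exact (degree_mul_le _ _).trans (add_le_add hg hg')
    · rw [map_mul, map_mul, ← h, ← h', smul_eq_mul, MulMemClass.coe_mul]
      ring

local notation "𝒥" => smallFractions R

lemma smul_mem_smallFractions {r : R} (hr : r ∈ 𝔪) (b : ℬ) : r • b ∈ 𝒥 := by
  obtain ⟨t, f, g, hf, hg, h⟩ := b
  refine ⟨f, r • g, hf, (degree_smul_le _ _).trans hg, ?_, ?_⟩
  · rw [smul_eq_C_mul, Polynomial.map_mul, map_C, (residue_eq_zero_iff r).2 hr, C_0, zero_mul]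
  · rw [SetLike.val_smul, smul_mul_assoc, h, Algebra.algebraMap_eq_smul_one, smul_eq_C_mul,
      Algebra.algebraMap_eq_smul_one, mul_smul, Algebra.smul_def (C r), Algebra.smul_def r,
      IsScalarTower.algebraMap_apply R R[X] 𝒯, Polynomial.algebraMap_eq]

lemma isUnit_of_sub_one_mem_smallFractions {b : ℬ} (hb : b - 1 ∈ 𝒥) : IsUnit (b : 𝒯) := by
  obtain ⟨f, g, hf, hg, hgm, h⟩ := hb
  have hc : IsUnit ((f + g).coeff f.natDegree) := by
    rw [coeff_add, hf.coeff_natDegree]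
    by_contra hu
    rw [← mem_nonunits_iff, ← mem_maximalIdeal, ← residue_eq_zero_iff, map_add, map_one,
      ← coeff_map, hgm, coeff_zero, add_zero] at hu
    exact one_ne_zero hu
  obtain ⟨c, hc'⟩ := hc.exists_left_inv
  have hmon : (C c * (f + g)).Monic := by
    refine monic_of_natDegree_le_of_coeff_eq_one f.natDegree ?_ (by rw [coeff_C_mul, hc'])
    refine (natDegree_C_mul_le _ _).trans (natDegree_add_le_of_degree_le le_rfl ?_)
    exact natDegree_le_natDegree hg
  have h1 := isUnit_algebraMap_of_monic hmon
  have h2 : (b : 𝒯) * algebraMap R[X] 𝒯 f = algebraMap R[X] 𝒯 (f + g) := by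
    rw [map_add, ← h, AddSubgroupClass.coe_sub, OneMemClass.coe_one]
    ring
  rw [map_mul, ← h2] at h1
  exact isUnit_of_mul_isUnit_left (isUnit_of_mul_isUnit_right h1)

lemma isUnit_det_one_sub_of_mem_smallFractions {n : Type*} [Fintype n] [DecidableEq n]
    {N : Matrix n n ℬ} (hN : ∀ i j, N i j ∈ 𝒥) :
    IsUnit (1 - N.map Subtype.val : Matrix n n 𝒯).det := by
  have h1 : (1 - N.map Subtype.val : Matrix n n 𝒯) = (1 - N).map (properFractions R).val := by
    ext i j
    by_cases h : i = j <;> simp [one_apply, h]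
  have h2 := (AlgHom.map_det (properFractions R).val (1 - N)).symm
  rw [AlgHom.mapMatrix_apply] at h2
  rw [h1, h2]
  exact isUnit_of_sub_one_mem_smallFractions (det_one_sub_sub_one_mem (S := ℬ) (I := 𝒥) hN)

section Decomposition

variable {n : Type*} [Fintype n]

lemma mem_smul_top_of_forall_monicResidue_eq_zero {t : n → 𝒯} (ht : ∀ j, monicResidue R (t j) = 0) :
    t ∈ (𝔪 • ⊤ : Submodule R (n → 𝒯)) := by
  classical
  rw [← Finset.univ_sum_single t]
  refine Submodule.sum_mem _ fun j _ => ?_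
  have h := Submodule.mem_map_of_mem (f := LinearMap.single R (fun _ : n => 𝒯) j)
    (mem_smul_top_of_monicResidue_eq_zero (ht j))
  rw [Submodule.map_smul''] at h
  exact Submodule.smul_mono le_rfl le_top h

/-- The sum of a polynomial row and a row of proper fractions multiplied by a matrix. -/
noncomputable def splitMap (G : Matrix n n 𝒯) :
    (n → R[X]) × (n → ℬ) →ₗ[R] (n → 𝒯) where
  toFun x := (fun j => algebraMap R[X] 𝒯 (x.1 j)) + (fun j => (x.2 j : 𝒯)) ᵥ* G
  map_add' x y := by
    ext j
    simp only [Pi.add_apply, vecMul, dotProduct, Prod.fst_add, Prod.snd_add, map_add,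
      AddMemClass.coe_add, add_mul, Finset.sum_add_distrib]
    ring
  map_smul' r x := by
    ext j
    simp [vecMul, dotProduct, Algebra.smul_def,
      IsScalarTower.algebraMap_apply R R[X] 𝒯, mul_assoc, Finset.mul_sum, mul_add]

variable [DecidableEq n]

lemma range_splitMap_eq_top {G : Matrix n n 𝒯} (hG : IsUnit G.det) {G₀ : Matrix n n R[X]}
    (hG₀ : ∀ i j, monicResidue R (G i j) = monicResidue R (algebraMap R[X] 𝒯 (G₀ i j))) :
    LinearMap.range (splitMap G) = ⊤ := by
  set W := LinearMap.range (splitMap G)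
  have hsplit : ∀ t : n → 𝒯, ∃ a : n → R[X],
      t - (fun i => algebraMap R[X] 𝒯 (a i)) ᵥ* G ∈ W := fun t => by
    choose a b hab using fun i => exists_eq_algebraMap_add ((t ᵥ* G⁻¹) i)
    refine ⟨a, (0, b), ?_⟩
    have ht : t = (t ᵥ* G⁻¹) ᵥ* G := by
      rw [vecMul_vecMul, nonsing_inv_mul _ hG, vecMul_one]
    rw [eq_sub_iff_add_eq, ht, show t ᵥ* G⁻¹ =
      (fun i => algebraMap R[X] 𝒯 (a i)) + fun i => (b i : 𝒯) from funext hab, add_vecMul]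
    ext j
    simp [splitMap, add_comm]
  have hpoly : ∀ a : n → R[X], (fun i => algebraMap R[X] 𝒯 (a i)) ∈ W := fun a =>
    ⟨(a, 0), by ext j; simp [splitMap, vecMul, dotProduct]⟩
  have hW : (⊤ : Submodule R (n → 𝒯)) ≤ W ⊔ 𝔪 • ⊤ := fun t _ => by
    obtain ⟨a, ha⟩ := hsplit t
    have h0 : (fun i => algebraMap R[X] 𝒯 (a i)) ᵥ* G₀.map (algebraMap R[X] 𝒯) ∈ W := by
      convert hpoly (a ᵥ* G₀) using 2
      simp [vecMul, dotProduct, map_sum]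
    rw [show t = (t - (fun i => algebraMap R[X] 𝒯 (a i)) ᵥ* G +
      (fun i => algebraMap R[X] 𝒯 (a i)) ᵥ* G₀.map (algebraMap R[X] 𝒯)) +
      (fun i => algebraMap R[X] 𝒯 (a i)) ᵥ* (G - G₀.map (algebraMap R[X] 𝒯)) by
        rw [vecMul_sub]; abel]
    refine add_mem (Submodule.mem_sup_left (add_mem ha h0)) (Submodule.mem_sup_right ?_)
    refine mem_smul_top_of_forall_monicResidue_eq_zero fun j => ?_
    simp [vecMul, dotProduct, map_sum, hG₀]
  obtain ⟨f, hf⟩ := IsLocalization.exist_integer_multiples_of_finite (monics R)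
    fun x : n × n => G x.1 x.2
  choose P hP using hf
  let Ψ : (n → degreeLT R (f : R[X]).natDegree) →ₗ[R] (n → 𝒯) :=
    { toFun r := (fun i => algebraMap R[X] 𝒯 (r i)) ᵥ* G
      map_add' x y := by
        rw [← add_vecMul]
        congr 1
        ext i
        simp
      map_smul' r x := by
        rw [RingHom.id_apply, ← smul_vecMul]
        congr 1
        ext i
        simp [Algebra.smul_def, IsScalarTower.algebraMap_apply R R[X] 𝒯] }
  have hfin : Module.Finite R (degreeLT R (f : R[X]).natDegree) :=
    Module.Finite.equiv (degreeLTEquiv R _).symm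
  have hΨ : (⊤ : Submodule R (n → 𝒯)) ≤ W ⊔ LinearMap.range Ψ := fun t _ => by
    obtain ⟨a, ha⟩ := hsplit t
    have hfm : (f : R[X]).Monic := f.2
    have hmod : ∀ i, a i %ₘ f ∈ degreeLT R (f : R[X]).natDegree := fun i => by
      rw [mem_degreeLT, ← degree_eq_natDegree hfm.ne_zero]
      exact degree_modByMonic_lt _ hfm
    have hdiv : (fun i => algebraMap R[X] 𝒯 (a i /ₘ f * f)) ᵥ* G ∈ W := by
      convert hpoly ((fun i => a i /ₘ f) ᵥ* of fun i j => P (i, j)) using 2 with j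
      simp only [vecMul, dotProduct, map_sum, map_mul, of_apply, hP, Algebra.smul_def, mul_assoc]
    rw [show t = (t - (fun i => algebraMap R[X] 𝒯 (a i)) ᵥ* G +
      (fun i => algebraMap R[X] 𝒯 (a i /ₘ f * f)) ᵥ* G) +
      (fun i => algebraMap R[X] 𝒯 (a i %ₘ f)) ᵥ* G by
        rw [add_assoc, ← add_vecMul, sub_add, eq_comm, sub_eq_self, sub_eq_zero]
        congr 1
        ext i
        rw [Pi.add_apply, ← map_add, mul_comm, add_comm, modByMonic_add_div]]
    exact add_mem (Submodule.mem_sup_left (add_mem ha hdiv))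
      (Submodule.mem_sup_right ⟨fun i => ⟨_, hmod i⟩, rfl⟩)
  have hle : LinearMap.range Ψ ≤ W := by
    refine Submodule.le_of_le_smul_of_le_jacobson_bot (Module.Finite.iff_fg.1 inferInstance)
      (IsLocalRing.jacobson_eq_maximalIdeal ⊥ bot_ne_top).ge ?_
    calc LinearMap.range Ψ ≤ W ⊔ 𝔪 • ⊤ := le_top.trans hW
      _ ≤ W ⊔ 𝔪 • (W ⊔ LinearMap.range Ψ) := sup_le_sup_left (Submodule.smul_mono le_rfl hΨ) _
      _ ≤ W ⊔ 𝔪 • LinearMap.range Ψ := by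
        rw [Submodule.smul_sup, ← sup_assoc]
        exact sup_le_sup_right (sup_le le_rfl Submodule.smul_le_right) _
  exact top_le_iff.1 (hΨ.trans (sup_le le_rfl hle))

lemma exists_eq_add_vecMul {G : Matrix n n 𝒯} (hG : IsUnit G.det) {G₀ : Matrix n n R[X]}
    (hG₀ : ∀ i j, monicResidue R (G i j) = monicResidue R (algebraMap R[X] 𝒯 (G₀ i j)))
    {t : n → 𝒯} (ht : ∀ j, monicResidue R (t j) = 0) :
    ∃ (a : n → R[X]) (b : n → ℬ), (∀ j, (a j).map (residue R) = 0) ∧ (∀ j, b j ∈ 𝒥) ∧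
      t = (fun j => algebraMap R[X] 𝒯 (a j)) + (fun j => (b j : 𝒯)) ᵥ* G := by
  have h := mem_smul_top_of_forall_monicResidue_eq_zero ht
  rw [← range_splitMap_eq_top hG hG₀, LinearMap.range_eq_map, ← Submodule.map_smul''] at h
  obtain ⟨x, hx, rfl⟩ := h
  refine ⟨x.1, x.2, ?_, ?_, rfl⟩
  · refine Submodule.smul_induction_on hx (fun r hr x _ j => ?_) (fun x y h h' j => ?_)
    · simp [(residue_eq_zero_iff r).2 hr, smul_eq_C_mul]
    · simp [h j, h' j]
  · refine Submodule.smul_induction_on hx (fun r hr x _ j => ?_) (fun x y h h' j => ?_)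
    · exact smul_mem_smallFractions hr _
    · exact Ideal.add_mem _ (h j) (h' j)

end Decomposition

end Horrocks

lemma det_fromBlocks_smul_comm {S ι κ : Type*} [CommRing S] [IsDomain S] [Fintype ι] [Fintype κ]
    [DecidableEq ι] [DecidableEq κ] (q : S) (A : Matrix ι ι S) (B : Matrix ι κ S)
    (C : Matrix κ ι S) (D : Matrix κ κ S) :
    (fromBlocks A (q • B) C D).det = (fromBlocks A B (q • C) D).det := by
  by_cases hq : q = 0
  · simp [hq]
  have h : fromBlocks A B (q • C) D * fromBlocks 1 0 0 (q • 1) =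
      fromBlocks 1 0 0 (q • 1) * fromBlocks A (q • B) C D := by
    simp [fromBlocks_multiply]
  have h' := congrArg det h
  rw [det_mul, det_mul, mul_comm, det_fromBlocks_zero₂₁, det_one, one_mul, det_smul, det_one,
    mul_one] at h'
  exact (mul_left_cancel₀ (pow_ne_zero _ hq) h').symm

section Horrocks

open Polynomial IsLocalRing

variable {R : Type*} [CommRing R] [IsLocalRing R]

local notation "𝒯" => Localization (monics R)

local notation "𝔪" => maximalIdeal R

local notation "ℱ" => FractionRing (ResidueField R)[X]

local notation "π" => monicResidue R

lemma isUnit_of_isUnit_algebraMap_of_isUnit_map [IsDomain R] {g : R[X]}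
    (hg : IsUnit (algebraMap R[X] 𝒯 g))
    (hg' : IsUnit (g.map (residue R))) : IsUnit g := by
  obtain ⟨t, ht⟩ := hg.exists_right_inv
  obtain ⟨f, h, hf, hfh⟩ := exists_monic_mul_eq t
  have hgh : g * h = f := by
    apply IsLocalization.injective 𝒯 (monics_le_nonZeroDivisors (R := R))
    rw [map_mul, ← hfh, ← mul_assoc, ht, one_mul]
  have hlc : IsUnit g.leadingCoeff := by
    rw [← hgh, Monic, leadingCoeff_mul] at hf
    exact IsUnit.of_mul_eq_one _ hf
  have hdeg : g.natDegree = 0 := by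
    rw [← natDegree_map_of_leadingCoeff_ne_zero (residue R) (hlc.map (residue R)).ne_zero]
    exact natDegree_eq_zero_of_isUnit hg'
  rw [leadingCoeff, hdeg] at hlc
  rw [eq_C_of_natDegree_eq_zero hdeg]
  exact hlc.map C

variable {ι κ : Type*} [Fintype ι] [Fintype κ] [DecidableEq ι] [DecidableEq κ]

/-- A completion with monic denominators can be normalised modulo the maximal ideal. -/
lemma exists_fromBlocks_normalised {q : R} (hq : q ∈ 𝔪) {i₀ : ι} {u : ι ⊕ κ → R[X]}
    (hT : Completable (algebraMap R[X] 𝒯 (C q)) i₀ fun j => algebraMap R[X] 𝒯 (u j))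
    {Γ : Matrix ι ι (ResidueField R)[X]} (hΓ : IsUnit Γ.det)
    (hΓu : ∀ j, Γ i₀ j = (u (Sum.inl j)).map (residue R)) :
    ∃ (P : Matrix ι ι 𝒯) (Q : Matrix ι κ 𝒯) (S : Matrix κ ι 𝒯) (D : Matrix κ κ 𝒯),
      IsUnit (fromBlocks P Q (algebraMap R[X] 𝒯 (C q) • S) D).det ∧
      (∀ j, P i₀ j = algebraMap R[X] 𝒯 (u (Sum.inl j))) ∧
      (∀ j, Q i₀ j = algebraMap R[X] 𝒯 (u (Sum.inr j))) ∧
      P.map π = Γ.map (algebraMap (ResidueField R)[X] ℱ) ∧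
      (∀ i, i ≠ i₀ → ∀ j, π (Q i j) = 0) ∧ S.map π = 0 ∧ D.map π = 1 := by
  obtain ⟨G, ⟨hG, hdvd⟩, hGu⟩ := hT
  choose c hc using hdvd
  set q' := algebraMap R[X] 𝒯 (C q)
  have hq' : π q' = 0 := by
    rw [monicResidue_algebraMap, map_C, (residue_eq_zero_iff q).2 hq, C_0, map_zero]
  have hG21 : G.toBlocks₂₁ = q' • of c := by
    ext i j
    exact hc i j
  have hGb : G = fromBlocks G.toBlocks₁₁ G.toBlocks₁₂ (q' • of c) G.toBlocks₂₂ := by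
    rw [← hG21, fromBlocks_toBlocks]
  have hP0 : ∀ j, G.toBlocks₁₁ i₀ j = algebraMap R[X] 𝒯 (u (Sum.inl j)) :=
    fun j => congrFun hGu (Sum.inl j)
  have hQ0 : ∀ j, G.toBlocks₁₂ i₀ j = algebraMap R[X] 𝒯 (u (Sum.inr j)) :=
    fun j => congrFun hGu (Sum.inr j)
  generalize G.toBlocks₁₁ = P₀ at hGb hP0
  generalize G.toBlocks₁₂ = Q₀ at hGb hQ0
  generalize G.toBlocks₂₂ = D₀ at hGb
  generalize of c = S₀ at hGb
  rw [hGb] at hG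
  have hdet : (P₀.map π).det ≠ 0 ∧ (D₀.map π).det ≠ 0 := by
    have h := (hG.map π).ne_zero
    rw [RingHom.map_det, RingHom.mapMatrix_apply, fromBlocks_map,
      show (q' • S₀).map π = 0 by ext; simp [hq'], det_fromBlocks_zero₂₁] at h
    exact mul_ne_zero_iff.1 h
  have hPu : IsUnit (P₀.map π).det := IsUnit.mk0 _ hdet.1
  have hDu : IsUnit (D₀.map π).det := IsUnit.mk0 _ hdet.2
  set Γ' := Γ.map (algebraMap (ResidueField R)[X] ℱ)
  have hΓ' : IsUnit Γ'.det := by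
    have := hΓ.map (algebraMap (ResidueField R)[X] ℱ)
    rwa [RingHom.map_det] at this
  obtain ⟨H, hH, hHπ, hHrow⟩ := exists_lift_of_row_eq i₀ (Γ' * (P₀.map π)⁻¹)
    (by rw [det_mul]; exact (hΓ'.mul (isUnit_nonsing_inv_det _ hPu)).ne_zero) (by
      ext j
      have h1 : Γ' i₀ = P₀.map π i₀ := by
        ext j
        simp [Γ', hΓu, hP0, monicResidue_algebraMap]
      rw [mul_apply_eq_vecMul, h1, ← mul_apply_eq_vecMul, mul_nonsing_inv _ hPu, one_apply,
        Pi.single_apply]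
      simp only [eq_comm])
  obtain ⟨E, hE, hEπ⟩ := exists_lift_of_det_ne_zero (D₀.map π)⁻¹
    (isUnit_nonsing_inv_det _ hDu).ne_zero
  have hHP : (H * P₀).map π = Γ' := by
    rw [Matrix.map_mul, hHπ, nonsing_inv_mul_cancel_right _ _ hPu]
  have hED : (E * D₀).map π = 1 := by
    rw [Matrix.map_mul, hEπ, nonsing_inv_mul _ hDu]
  choose L hL using fun i j =>
    monicResidue_surjective (R := R) (((E * S₀).map π * Γ'⁻¹) i j)
  choose M₀ hM₀ using fun i j => monicResidue_surjective (R := R) ((H * Q₀).map π i j)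
  let M : Matrix ι κ 𝒯 := of fun i j => if i = i₀ then 0 else M₀ i j
  have hLπ : (of L).map π = (E * S₀).map π * Γ'⁻¹ := by
    ext i j
    exact hL i j
  let S₁ := E * S₀ - of L * (H * P₀)
  let D₁ := E * D₀ - q' • (of L * (H * Q₀))
  have hS₁ : S₁.map π = 0 := by
    rw [Matrix.map_sub _ (map_sub _), Matrix.map_mul (L := of L), hLπ, hHP,
      nonsing_inv_mul_cancel_right _ _ hΓ', sub_self]
  have hD₁ : D₁.map π = 1 := by
    rw [Matrix.map_sub _ (map_sub _), hED, sub_eq_self]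
    ext i j
    simp [hq']
  refine ⟨H * P₀ - q' • (M * S₁), H * Q₀ - M * D₁, S₁, D₁, ?_, ?_, ?_, ?_, ?_, hS₁, hD₁⟩
  · have : fromBlocks (H * P₀ - q' • (M * S₁)) (H * Q₀ - M * D₁) (q' • S₁) D₁ =
        fromBlocks 1 (-M) 0 1 * (fromBlocks 1 0 (-(q' • of L)) 1 *
          (fromBlocks H 0 0 E * fromBlocks P₀ Q₀ (q' • S₀) D₀)) := by
      simp only [fromBlocks_multiply, S₁, D₁, Matrix.one_mul, Matrix.zero_mul, add_zero, zero_add,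
        Matrix.neg_mul, smul_mul]
      congr 1
      · simp [Matrix.mul_add, smul_add, sub_eq_add_neg, add_comm]
      · simp [sub_eq_add_neg, add_comm]
      · simp [sub_eq_add_neg, add_comm]
      · simp [sub_eq_add_neg, add_comm]
    rw [this, det_mul, det_mul, det_mul, det_fromBlocks_zero₂₁, det_fromBlocks_zero₁₂,
      det_fromBlocks_zero₁₂, det_one, det_one]
    simpa using (hH.mul hE).mul hG
  · intro j
    rw [Matrix.sub_apply, mul_apply_eq_vecMul, hHrow, single_one_vecMul, row_apply, hP0,
      Matrix.smul_apply,
      mul_apply]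
    simp [M]
  · intro j
    rw [Matrix.sub_apply, mul_apply_eq_vecMul, hHrow, single_one_vecMul, row_apply, hQ0, mul_apply]
    simp [M]
  · rw [Matrix.map_sub _ (map_sub _), hHP, sub_eq_self]
    ext i j
    simp [hq']
  · intro i hi j
    have h1 : (M * D₁).map π = M.map π := by
      rw [Matrix.map_mul, hD₁, Matrix.mul_one]
    have h2 : π ((M * D₁) i j) = π (M i j) := congrFun (congrFun h1 i) j
    rw [Matrix.sub_apply, map_sub, h2]
    simp [M, hi, hM₀]

theorem RelUnimodular.completable_of_completable_localization [IsDomain R] {q : R} (hq : q ∈ 𝔪)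
    {i₀ : ι} {u : ι ⊕ κ → R[X]} (hu : RelUnimodular (C q) u)
    (hT : Completable (algebraMap R[X] 𝒯 (C q)) i₀ fun j => algebraMap R[X] 𝒯 (u j)) :
    Completable (C q) i₀ u := by
  have hq0 : residue R q = 0 := (residue_eq_zero_iff q).2 hq
  obtain ⟨Γ, hΓ, hΓu⟩ : ∃ Γ : Matrix ι ι (ResidueField R)[X], IsUnit Γ.det ∧
      Γ i₀ = fun j => (u (Sum.inl j)).map (residue R) := by
    obtain ⟨v, hv, huv⟩ := hu
    refine exists_row_eq i₀ _ (fun j => (v (Sum.inl j)).map (residue R)) ?_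
    have h := congrArg (mapRingHom (residue R)) huv
    have hv0 : ∀ j, (v (Sum.inr j)).map (residue R) = 0 := fun j => by
      obtain ⟨w, hw⟩ := hv j
      rw [hw, Polynomial.map_mul, map_C, hq0, C_0, zero_mul]
    rw [dotProduct, map_sum, Fintype.sum_sum_type] at h
    simpa [dotProduct, hv0] using h
  obtain ⟨P, Q, S, D, hdet, hPu, hQu, hP, hQ, hS, hD⟩ :=
    exists_fromBlocks_normalised hq hT hΓ (congrFun hΓu)
  choose Γ₀ hΓ₀ using fun i j => map_surjective (residue R) residue_surjective (Γ i j)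
  have hP' : ∀ i j, π (P i j) = algebraMap (ResidueField R)[X] ℱ (Γ i j) :=
    fun i j => congrFun (congrFun hP i) j
  have hS' : ∀ i j, π (S i j) = 0 := fun i j => congrFun (congrFun hS i) j
  have hD' : ∀ i j, π (D i j) = (1 : Matrix κ κ ℱ) i j := fun i j => congrFun (congrFun hD i) j
  set q' := algebraMap R[X] 𝒯 (C q) with hq'_def
  have hq' : π q' = 0 := by rw [monicResidue_algebraMap, map_C, hq0, C_0, map_zero]
  have hdet' : IsUnit (fromBlocks P (q' • Q) S D).det := by rwa [det_fromBlocks_smul_comm]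
  let P₀ : Matrix ι ι R[X] := of fun i j => if i = i₀ then u (Sum.inl j) else Γ₀ i j
  let Q₀ : Matrix ι κ R[X] := of fun i j => if i = i₀ then u (Sum.inr j) else 0
  have hP₀ : ∀ i j, (P₀ i j).map (residue R) = Γ i j := fun i j => by
    by_cases hi : i = i₀
    · simp [P₀, hi, hΓu]
    · simp [P₀, hi, hΓ₀]
  have hP₀' : ∀ i j, π (P i j) = π (algebraMap R[X] 𝒯 (P₀ i j)) := fun i j => by
    rw [hP', monicResidue_algebraMap, hP₀]
  have hQ₀' : ∀ i j, π (Q i j) = π (algebraMap R[X] 𝒯 (Q₀ i j)) := fun i j => by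
    by_cases hi : i = i₀
    · simp [Q₀, hi, hQu]
    · simp [Q₀, hi, hQ i hi]
  have hD₀' : ∀ i j, π (D i j) = π (algebraMap R[X] 𝒯 ((1 : Matrix κ κ R[X]) i j)) :=
    fun i j => by
      rw [hD']
      by_cases hij : i = j <;> simp [hij, one_apply]
  have hG : ∀ i j, π (fromBlocks P Q (q' • S) D i j) =
      π (algebraMap R[X] 𝒯 (fromBlocks P₀ Q₀ (0 : Matrix κ ι R[X])
        (1 : Matrix κ κ R[X]) i j)) := by
    rintro (i | i) (j | j)
    · exact hP₀' i j
    · exact hQ₀' i j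
    · simp [hq']
    · exact hD₀' i j
  have hG' : ∀ i j, π (fromBlocks P (q' • Q) S D i j) =
      π (algebraMap R[X] 𝒯 (fromBlocks P₀ (0 : Matrix ι κ R[X]) (0 : Matrix κ ι R[X])
        (1 : Matrix κ κ R[X]) i j)) := by
    rintro (i | i) (j | j)
    · exact hP₀' i j
    · simp [hq']
    · simp [hS']
    · exact hD₀' i j
  have hupper : ∀ i : ι, ∃ (a : ι ⊕ κ → R[X]) (b : ι ⊕ κ → properFractions R),
      (∀ j, (a j).map (residue R) = 0) ∧ (∀ j, b j ∈ smallFractions R) ∧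
      (fun j => fromBlocks P Q (q' • S) D (Sum.inl i) j -
        algebraMap R[X] 𝒯 (fromBlocks P₀ Q₀ (0 : Matrix κ ι R[X]) (1 : Matrix κ κ R[X])
          (Sum.inl i) j)) =
      (fun j => algebraMap R[X] 𝒯 (a j)) +
        (fun j => (b j : 𝒯)) ᵥ* fromBlocks P Q (q' • S) D ∧ (i = i₀ → a = 0) := by
    intro i
    by_cases hi : i = i₀
    · refine ⟨0, 0, by simp, fun _ => Ideal.zero_mem _, ?_, fun _ => rfl⟩
      ext (j | j)
      · simp [hi, P₀, hPu, vecMul, dotProduct]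
      · simp [hi, Q₀, hQu, vecMul, dotProduct]
    · obtain ⟨a, b, ha, hb, hab⟩ := exists_eq_add_vecMul hdet hG
        (t := fun j => fromBlocks P Q (q' • S) D (Sum.inl i) j -
          algebraMap R[X] 𝒯 (fromBlocks P₀ Q₀ (0 : Matrix κ ι R[X]) (1 : Matrix κ κ R[X])
            (Sum.inl i) j))
        (fun j => by rw [map_sub, hG, sub_self])
      exact ⟨a, b, ha, hb, hab, fun h => absurd h hi⟩
  choose a b ha hb hab ha₀ using hupper
  choose a' b' ha' hb' hab' using fun i : κ => exists_eq_add_vecMul hdet' hG'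
    (t := fun j => fromBlocks P (q' • Q) S D (Sum.inr i) j -
      algebraMap R[X] 𝒯 (fromBlocks P₀ (0 : Matrix ι κ R[X]) (0 : Matrix κ ι R[X])
        (1 : Matrix κ κ R[X]) (Sum.inr i) j))
    (fun j => by rw [map_sub, hG', sub_self])
  let G : Matrix (ι ⊕ κ) (ι ⊕ κ) R[X] :=
    fromBlocks (of fun i j => P₀ i j + a i (Sum.inl j)) (of fun i j => Q₀ i j + a i (Sum.inr j))
      (of fun i j => C q * a' i (Sum.inl j))
      (of fun i j => (1 : Matrix κ κ R[X]) i j + a' i (Sum.inr j))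
  let N : Matrix (ι ⊕ κ) (ι ⊕ κ) (properFractions R) :=
    fromBlocks (of fun i j => b i (Sum.inl j)) (of fun i j => b i (Sum.inr j))
      (of fun i j => q • b' i (Sum.inl j)) (of fun i j => b' i (Sum.inr j))
  have hN : ∀ i j, N i j ∈ smallFractions R := by
    rintro (i | i) (j | j)
    · exact hb _ _
    · exact hb _ _
    · exact smul_mem_smallFractions hq _
    · exact hb' _ _
  have hsmul : ∀ t : 𝒯, q • t = q' * t := fun t => by
    rw [Algebra.smul_def, IsScalarTower.algebraMap_apply R R[X] 𝒯, Polynomial.algebraMap_eq]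
  have hNG : (1 - N.map Subtype.val) * fromBlocks P Q (q' • S) D =
      G.map (algebraMap R[X] 𝒯) := by
    rw [Matrix.sub_mul, Matrix.one_mul]
    ext1 (i | i) (j | j)
    · have h := congrFun (hab i) (Sum.inl j)
      simp [G, N, mul_apply, vecMul, dotProduct] at h ⊢
      linear_combination h
    · have h := congrFun (hab i) (Sum.inr j)
      simp [G, N, mul_apply, vecMul, dotProduct] at h ⊢
      linear_combination h
    · have h := congrFun (hab' i) (Sum.inl j)
      simp [G, N, mul_apply, vecMul, dotProduct, hsmul, mul_assoc, mul_left_comm _ q',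
        ← Finset.mul_sum] at h ⊢
      linear_combination q' * h
    · have h := congrFun (hab' i) (Sum.inr j)
      simp [G, N, mul_apply, vecMul, dotProduct, hsmul, mul_assoc, mul_left_comm _ q',
        ← Finset.mul_sum] at h ⊢
      linear_combination h
  refine ⟨G, ⟨isUnit_of_isUnit_algebraMap_of_isUnit_map ?_ ?_, fun i j => dvd_mul_right _ _⟩, ?_⟩
  · rw [RingHom.map_det, RingHom.mapMatrix_apply, ← hNG, det_mul]
    exact (isUnit_det_one_sub_of_mem_smallFractions hN).mul hdet
  · have h : G.map (mapRingHom (residue R)) = fromBlocks Γ (of fun i j => (Q₀ i j).map (residue R))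
        0 1 := by
      ext1 (i | i) (j | j)
      · simp [G, ha, hP₀]
      · simp [G, ha]
      · simp [G, hq0]
      · by_cases hij : i = j <;> simp [G, ha', one_apply, hij]
    rw [← coe_mapRingHom, RingHom.map_det, RingHom.mapMatrix_apply, h, det_fromBlocks_zero₂₁,
      det_one, mul_one]
    exact hΓ
  · ext1 (j | j)
    · simp [G, ha₀, P₀]
    · simp [G, ha₀, Q₀]

end Horrocks

section Horrocks

open Polynomial IsLocalRing

theorem RelUnimodular.completable_of_isLocalRing {R : Type*} [CommRing R] [IsLocalRing R]
    [IsDomain R] {ι κ : Type*} [Fintype ι] [Fintype κ] [DecidableEq ι] [DecidableEq κ] {q : R}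
    {i₀ : ι} {u : ι ⊕ κ → R[X]} (hu : RelUnimodular (C q) u)
    (hT : Completable (algebraMap R[X] (Localization (monics R)) (C q)) i₀
      fun j => algebraMap R[X] (Localization (monics R)) (u j)) :
    Completable (C q) i₀ u := by
  by_cases hq : q ∈ maximalIdeal R
  · exact hu.completable_of_completable_localization hq hT
  rw [mem_maximalIdeal, mem_nonunits_iff, not_not] at hq
  let e : (ι ⊕ κ) ⊕ Empty ≃ ι ⊕ κ := Equiv.sumEmpty _ _
  have h : Completable (C 0) (Sum.inl i₀) fun j => u (e j) := by
    refine RelUnimodular.completable_of_completable_localization (Ideal.zero_mem _) ?_ ?_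
    · obtain ⟨v, -, hv⟩ := hu
      refine ⟨fun j => v (e j), fun j => j.elim, ?_⟩
      rw [← hv]
      exact Equiv.sum_comp e fun j => u j * v j
    · obtain ⟨G, hG, hGu⟩ := hT
      refine ⟨G.submatrix e e, ⟨?_, fun j => j.elim⟩, ?_⟩
      · rw [det_submatrix_equiv_self]
        exact hG.isUnit_det
      · ext j
        exact congrFun hGu (e j)
  obtain ⟨G, hG, hGu⟩ := h
  refine ⟨G.submatrix e.symm e.symm, ⟨?_, fun i j => (hq.map C).dvd⟩, ?_⟩
  · rw [det_submatrix_equiv_self]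
    exact hG.isUnit_det
  · ext1 j
    have := congrFun hGu (e.symm j)
    rwa [Equiv.apply_symm_apply] at this

end Horrocks

section Patching

open Polynomial

/-- The substitution `x ↦ x + a y`, with values in polynomials in `y` over polynomials in `x`. -/
noncomputable def shift {A : Type*} [CommRing A] (a : A) : A[X] →+* A[X][X] :=
  eval₂RingHom (C.comp C) (C X + C (C a) * X)

/-- The substitution `y ↦ c y`. -/
noncomputable def dilate {A : Type*} [CommRing A] (c : A) : A[X][X] →+* A[X][X] :=
  eval₂RingHom C (C (C c) * X)

section Substitution

variable {A B : Type*} [CommRing A] [CommRing B]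

lemma shift_zero : shift (0 : A) = C := by
  apply Polynomial.ringHom_ext <;> simp [shift]

lemma dilate_comp_C (c : A) : (dilate c).comp C = C := by
  apply Polynomial.ringHom_ext <;> simp [dilate]

lemma dilate_comp_shift (c a : A) : (dilate c).comp (shift a) = shift (c * a) := by
  apply Polynomial.ringHom_ext
  · simp [dilate, shift]
  · simp [dilate, shift]
    ring

lemma mapRingHom_comp_shift (f : A →+* B) (a : A) :
    (mapRingHom (mapRingHom f)).comp (shift a) = (shift (f a)).comp (mapRingHom f) := by
  apply Polynomial.ringHom_ext <;> simp [shift]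

lemma mapRingHom_comp_dilate (f : A →+* B) (c : A) :
    (mapRingHom (mapRingHom f)).comp (dilate c) =
      (dilate (f c)).comp (mapRingHom (mapRingHom f)) := by
  apply Polynomial.ringHom_ext <;> simp [dilate]

lemma map_vecMul_apply {n : Type*} [Fintype n] (f : A →+* B) (u : n → A) (G : Matrix n n A)
    (j : n) :
    f ((u ᵥ* G) j) = ((fun i => f (u i)) ᵥ* G.map f) j := by
  simp [vecMul, dotProduct, map_sum]

end Substitution

attribute [local instance] Polynomial.algebra Polynomial.isLocalization in
lemma exists_common_denominator_s5 {A S σ : Type*} [CommRing A] [CommRing S] [Algebra A S]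
    (M : Submonoid A) [IsLocalization M S] [Finite σ] (f : σ → S[X][X]) :
    ∃ s ∈ M, ∀ i, ∃ g : A[X][X], mapRingHom (mapRingHom (algebraMap A S)) g =
      C (C (algebraMap A S s)) * f i := by
  obtain ⟨⟨b, b', ⟨s, hs, rfl⟩, rfl⟩, hb⟩ := IsLocalization.exist_integer_multiples_of_finite
    ((M.map (C : A →+* A[X])).map (C : A[X] →+* A[X][X])) f
  refine ⟨s, hs, fun i => ?_⟩
  obtain ⟨g, hg⟩ := hb i
  refine ⟨g, ?_⟩
  change mapRingHom (mapRingHom (algebraMap A S)) g = _ at hg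
  rw [hg, Algebra.smul_def]
  change mapRingHom (mapRingHom (algebraMap A S)) (C (C s)) * f i = _
  simp

variable {A ι κ : Type*} [CommRing A] [Fintype ι] [Fintype κ] [DecidableEq ι]
  [DecidableEq κ]

/-- The elements `a` such that the substitution `x ↦ x + a y` is realised on the row `u` by a
matrix with lower-left block divisible by `q`. -/
def quillenIdeal (q : A) (u : ι ⊕ κ → A[X]) : Ideal A where
  carrier := {a | ∃ Θ : Matrix (ι ⊕ κ) (ι ⊕ κ) A[X][X], IsRelParabolic (C (C q)) Θ ∧
    (fun j => C (u j)) ᵥ* Θ = fun j => shift a (u j)}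
  zero_mem' := ⟨1, ⟨by simp, fun i j => by simp⟩, by simp [shift_zero]⟩
  add_mem' := by
    rintro a b ⟨Θ, hΘ, h⟩ ⟨Θ', hΘ', h'⟩
    let τ : A[X][X] →+* A[X][X] := eval₂RingHom (shift b) X
    have hτC : τ.comp C = shift b := by
      apply Polynomial.ringHom_ext <;> simp [τ]
    have hτa : τ.comp (shift a) = shift (a + b) := by
      apply Polynomial.ringHom_ext
      · simp [τ, shift]
      · simp [τ, shift]
        ring
    have hτq : τ (C (C q)) = C (C q) := by simp [τ, shift]
    refine ⟨Θ' * Θ.map τ, hΘ'.mul (hτq ▸ hΘ.map τ), ?_⟩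
    rw [← vecMul_vecMul, h']
    ext1 j
    rw [← hτC, ← hτa, RingHom.comp_apply, ← congrFun h j, map_vecMul_apply]
    rfl
  smul_mem' := by
    rintro c a ⟨Θ, hΘ, h⟩
    have hq : dilate c (C (C q)) = C (C q) := RingHom.congr_fun (dilate_comp_C c) (C q)
    refine ⟨Θ.map (dilate c), hq ▸ hΘ.map (dilate c), ?_⟩
    ext1 j
    rw [smul_eq_mul, ← dilate_comp_shift, RingHom.comp_apply, ← congrFun h j, map_vecMul_apply]
    simp only [← RingHom.comp_apply, dilate_comp_C]

lemma exists_notMem_mem_quillenIdeal [IsDomain A] (m : Ideal A) [m.IsPrime] (S : Type*) [CommRing S]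
    [IsDomain S] [Algebra A S] [IsLocalization.AtPrime S m] {q : A} {i₀ : ι} {u : ι ⊕ κ → A[X]}
    (hu : Completable (C (algebraMap A S q)) i₀ fun j => (u j).map (algebraMap A S)) :
    ∃ s ∉ m, s ∈ quillenIdeal q u := by
  set φ := algebraMap A S
  have hφ : Function.Injective φ := IsLocalization.injective S m.primeCompl_le_nonZeroDivisors
  set Φ := mapRingHom (mapRingHom φ)
  have hΦ : Function.Injective Φ := map_injective _ (map_injective _ hφ)
  obtain ⟨G, hG, hGu⟩ := hu
  have hGC := hG.map (A' := S[X][X]) C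
  let Θ := (G.map (C : S[X] →+* S[X][X]))⁻¹ * G.map (shift (1 : S))
  have hshiftq : shift (1 : S) (C (φ q)) = C (C (φ q)) := by simp [shift]
  have hΘ : IsRelParabolic (C (C (φ q))) Θ := hGC.inv.mul (hshiftq ▸ hG.map (shift 1))
  have hΘu : (fun j => C ((u j).map φ)) ᵥ* Θ = fun j => shift 1 ((u j).map φ) := by
    have h1 : (fun j => C ((u j).map φ)) = (G.map (C : S[X] →+* S[X][X])) (Sum.inl i₀) := by
      ext1 j
      rw [map_apply, hGu]
    have h2 : G.map (C : S[X] →+* S[X][X]) * Θ = G.map (shift 1) := by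
      rw [← Matrix.mul_assoc, mul_nonsing_inv _ hGC.isUnit_det, Matrix.one_mul]
    ext1 j
    rw [h1, ← mul_apply_eq_vecMul, h2, map_apply, hGu]
  let ε : S[X][X] →+* S[X] := constantCoeff
  have hε : Θ.map ε = 1 := by
    have hεC : ε.comp C = RingHom.id _ := by ext <;> simp [ε]
    have hεs : ε.comp (shift 1) = RingHom.id _ := by
      apply Polynomial.ringHom_ext <;> simp [ε, shift]
    have h1 : (G.map (C : S[X] →+* S[X][X])).map ε = G := by
      ext1 i j
      exact RingHom.congr_fun hεC _
    have h2 : (G.map (shift (1 : S))).map ε = G := by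
      ext1 i j
      exact RingHom.congr_fun hεs _
    have h3 : ((G.map (C : S[X] →+* S[X][X]))⁻¹).map ε *
        (G.map (C : S[X] →+* S[X][X])).map ε = 1 := by
      rw [← Matrix.map_mul, nonsing_inv_mul _ hGC.isUnit_det,
        Matrix.map_one _ (map_zero _) (map_one _)]
    rw [Matrix.map_mul, h2, ← h3, h1]
  have hdet : Θ.det = 1 := by
    obtain ⟨r, -, hr⟩ := Polynomial.isUnit_iff.1 hΘ.isUnit_det
    have h := congrArg det hε
    have h' := RingHom.map_det ε Θ
    rw [RingHom.mapMatrix_apply, h, ← hr, det_one] at h'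
    rw [← hr, show r = 1 by simpa [ε] using h', C_1]
  let w : ι ⊕ κ → ι ⊕ κ → A := Sum.elim (fun _ _ => 1) fun _ => Sum.elim (fun _ => q) fun _ => 1
  have hw : ∀ i j, C (C (φ (w i j))) ∣ Θ i j := by
    rintro (i | i) (j | j)
    · simp [w]
    · simp [w]
    · exact hΘ.dvd i j
    · simp [w]
  choose W hW using hw
  have hΘW : ∀ i j, Θ i j =
      (1 : Matrix _ _ S[X][X]) i j + X * (C (C (φ (w i j))) * (W i j).divX) := by
    intro i j
    have h1 : C ((Θ i j).coeff 0) = (1 : Matrix (ι ⊕ κ) (ι ⊕ κ) S[X][X]) i j := by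
      have h2 : (Θ i j).coeff 0 = (1 : Matrix (ι ⊕ κ) (ι ⊕ κ) S[X]) i j :=
        congrFun (congrFun hε i) j
      rw [h2]
      by_cases hij : i = j <;> simp [hij, one_apply]
    rw [← divX_C_mul, ← hW, ← h1, add_comm, X_mul_divX_add]
  obtain ⟨s, hs, hsW⟩ := exists_common_denominator_s5 m.primeCompl
    fun x : (ι ⊕ κ) × (ι ⊕ κ) => (W x.1 x.2).divX
  choose Ξ hΞ using hsW
  let Θ₀ : Matrix (ι ⊕ κ) (ι ⊕ κ) A[X][X] :=
    1 + of fun i j => X * (C (C (w i j)) * dilate s (Ξ (i, j)))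
  have hΘ₀ : Θ₀.map Φ = Θ.map (dilate (φ s)) := by
    ext1 i j
    have h1 := RingHom.congr_fun (mapRingHom_comp_dilate φ s) (Ξ (i, j))
    rw [RingHom.comp_apply, RingHom.comp_apply, hΞ, map_mul] at h1
    have h2 : dilate (φ s) ((1 : Matrix (ι ⊕ κ) (ι ⊕ κ) S[X][X]) i j) =
        Φ ((1 : Matrix (ι ⊕ κ) (ι ⊕ κ) A[X][X]) i j) := by
      by_cases hij : i = j <;> simp [hij, one_apply]
    have h3 : dilate (φ s) X = C (C (φ s)) * X := by simp [dilate]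
    have h4 : ∀ r, dilate (φ s) (C (C r)) = C (C r) := by simp [dilate]
    have h5 : ∀ r, Φ (C (C r)) = C (C (φ r)) := by simp [Φ]
    have h6 : Φ X = X := by simp [Φ]
    rw [map_apply, map_apply, hΘW, map_add, h2, map_mul, h3, map_mul, h4,
      show Θ₀ i j = (1 : Matrix (ι ⊕ κ) (ι ⊕ κ) A[X][X]) i j +
        X * (C (C (w i j)) * dilate s (Ξ (i, j))) from rfl, map_add, map_mul, map_mul,
        h1, h4, h5, h6]
    ring
  refine ⟨s, hs, Θ₀, ⟨?_, ?_⟩, ?_⟩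
  · have h : Θ₀.det = 1 := by
      apply hΦ
      rw [RingHom.map_det, RingHom.mapMatrix_apply, hΘ₀, ← RingHom.mapMatrix_apply,
        ← RingHom.map_det, hdet, map_one, map_one]
    rw [h]
    exact isUnit_one
  · intro i j
    simp [Θ₀, w]
    exact (dvd_mul_right _ _).mul_left _
  · ext1 j
    apply hΦ
    have h1 := RingHom.congr_fun (mapRingHom_comp_shift φ s) (u j)
    have h2 := RingHom.congr_fun (dilate_comp_shift (φ s) 1) ((u j).map φ)
    rw [RingHom.comp_apply, RingHom.comp_apply] at h1
    rw [RingHom.comp_apply, ← congrFun hΘu j, map_vecMul_apply, mul_one] at h2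
    rw [map_vecMul_apply, hΘ₀, h1]
    refine Eq.trans ?_ h2
    congr 2
    ext1 i
    have h3 := RingHom.congr_fun (dilate_comp_C (φ s)) ((u i).map φ)
    rw [RingHom.comp_apply] at h3
    rw [h3]
    simp [Φ]

/-- A row over `A[X]` which is completable locally on `A` is completable as soon as its value at
zero is. -/
theorem completable_of_forall_isMaximal [IsDomain A] {q : A} {i₀ : ι} {u : ι ⊕ κ → A[X]}
    (hloc : ∀ (m : Ideal A) [m.IsMaximal],
      Completable (C (algebraMap A (Localization.AtPrime m) q)) i₀
        fun j => (u j).map (algebraMap A (Localization.AtPrime m)))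
    (h0 : Completable q i₀ fun j => (u j).eval 0) : Completable (C q) i₀ u := by
  have htop : quillenIdeal q u = ⊤ := by
    by_contra h
    obtain ⟨m, hm, hle⟩ := Ideal.exists_le_maximal _ h
    obtain ⟨s, hs, hsu⟩ := exists_notMem_mem_quillenIdeal m (Localization.AtPrime m) (hloc m)
    exact hs (hle hsu)
  obtain ⟨Θ, hΘ, h⟩ := (Ideal.eq_top_iff_one _).1 htop
  let ψ : A[X][X] →+* A[X] := eval₂RingHom (C.comp (evalRingHom 0)) X
  have hψC : ψ.comp C = C.comp (evalRingHom 0) := by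
    apply Polynomial.ringHom_ext <;> simp [ψ]
  have hψs : ψ.comp (shift 1) = RingHom.id _ := by
    apply Polynomial.ringHom_ext <;> simp [ψ, shift]
  have hψq : ψ (C (C q)) = C q := by simp [ψ]
  convert (h0.map C).vecMul (hψq ▸ hΘ.map ψ) using 1
  ext1 j
  have h1 := congrArg ψ (congrFun h j)
  rw [map_vecMul_apply] at h1
  simp only [← RingHom.comp_apply, hψC, hψs] at h1
  exact h1.symm

end Patching

section QuillenSuslin

variable {ι κ : Type*} [Fintype ι] [Fintype κ] [DecidableEq ι] [DecidableEq κ]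

lemma completable_map_of_isLocalRing {n : ℕ} {R S : Type*} [CommRing R] [CommRing S] [IsDomain S]
    [IsLocalRing S] (φ : MvPolynomial (Fin n) R →+* S) {q : R} {i₀ : ι}
    {w : ι ⊕ κ → Polynomial (MvPolynomial (Fin n) R)}
    (hw : RelUnimodular (Polynomial.C (MvPolynomial.C q)) w)
    (h : ∀ (q' : Localization (monics R))
      (u : ι ⊕ κ → MvPolynomial (Fin n) (Localization (monics R))),
      RelUnimodular (MvPolynomial.C q') u → Completable (MvPolynomial.C q') i₀ u) :
    Completable (Polynomial.C (φ (MvPolynomial.C q))) i₀ fun j => (w j).map φ := by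
  refine RelUnimodular.completable_of_isLocalRing ?_ ?_
  · simpa using hw.map (Polynomial.mapRingHom φ)
  let α : Polynomial (MvPolynomial (Fin n) R) →+*
      MvPolynomial (Fin n) (Localization (monics R)) :=
    Polynomial.eval₂RingHom
      (MvPolynomial.map ((algebraMap (Polynomial R) (Localization (monics R))).comp Polynomial.C))
      (MvPolynomial.C (algebraMap (Polynomial R) (Localization (monics R)) Polynomial.X))
  let β₀ : Localization (monics R) →+* Localization (monics S) :=
    IsLocalization.lift (M := monics R)
      (g := (algebraMap (Polynomial S) (Localization (monics S))).comp
        (Polynomial.mapRingHom (φ.comp MvPolynomial.C))) fun f =>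
          isUnit_algebraMap_of_monic ((mem_monics.1 f.2).map _)
  have hβ₀ : ∀ f, β₀ (algebraMap (Polynomial R) (Localization (monics R)) f) =
      algebraMap (Polynomial S) (Localization (monics S)) (f.map (φ.comp MvPolynomial.C)) :=
    fun f => IsLocalization.lift_eq _ f
  let β : MvPolynomial (Fin n) (Localization (monics R)) →+* Localization (monics S) :=
    MvPolynomial.eval₂Hom β₀
      fun i => algebraMap (Polynomial S) (Localization (monics S))
        (Polynomial.C (φ (MvPolynomial.X i)))
  have hβα : β.comp α = (algebraMap (Polynomial S) (Localization (monics S))).comp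
      (Polynomial.mapRingHom φ) := by
    refine Polynomial.ringHom_ext' (MvPolynomial.ringHom_ext (fun r => ?_) fun i => ?_) ?_
    · simp [α, β, hβ₀]
    · simp [α, β]
    · simp [α, β, hβ₀]
  have hα := hw.map (A' := MvPolynomial (Fin n) (Localization (monics R))) α
  rw [show α (Polynomial.C (MvPolynomial.C q)) =
    MvPolynomial.C (algebraMap (Polynomial R) (Localization (monics R)) (Polynomial.C q)) by
      simp [α]] at hα
  have hβ := (h _ _ hα).map β
  rw [show β (MvPolynomial.C (algebraMap (Polynomial R) (Localization (monics R))
    (Polynomial.C q))) = algebraMap (Polynomial S) (Localization (monics S))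
      (Polynomial.C (φ (MvPolynomial.C q))) by simp [β, hβ₀]] at hβ
  convert hβ using 2 with j
  exact (RingHom.congr_fun hβα (w j)).symm

/-- A relative form of the Quillen–Suslin theorem over a principal ideal domain. -/
theorem RelUnimodular.completable_mvPolynomial (n : ℕ) {R : Type*} [CommRing R] [IsDomain R]
    [IsPrincipalIdealRing R] {q : R} {u : ι ⊕ κ → MvPolynomial (Fin n) R}
    (hu : RelUnimodular (MvPolynomial.C q) u) (i₀ : ι) :
    Completable (MvPolynomial.C q) i₀ u := by
  induction n generalizing R with
  | zero =>
    have := IsPrincipalIdealRing.of_surjective (MvPolynomial.isEmptyAlgEquiv R (Fin 0)).symm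
      (MvPolynomial.isEmptyAlgEquiv R (Fin 0)).symm.surjective
    exact hu.completable_of_isPrincipalIdealRing i₀
  | succ n ih =>
    let E := (MvPolynomial.finSuccEquiv R n).toRingEquiv
    have hEq : E (MvPolynomial.C q) = Polynomial.C (MvPolynomial.C q) :=
      ((RingEquiv.symm_apply_eq E).1
        (RingHom.congr_fun (MvPolynomial.finSuccEquiv_comp_C_eq_C (R := R) n) q)).symm
    have hu' := hu.map (E : _ →+* Polynomial (MvPolynomial (Fin n) R))
    rw [RingEquiv.coe_toRingHom, hEq] at hu'
    suffices h : Completable (Polynomial.C (MvPolynomial.C q)) i₀ fun j => E (u j) by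
      have h' := h.map (E.symm : _ →+* MvPolynomial (Fin (n + 1)) R)
      rw [RingEquiv.coe_toRingHom, ← hEq] at h'
      simpa using h'
    generalize (fun j => E (u j)) = w at hu'
    refine completable_of_forall_isMaximal (fun m hm => ?_) ?_
    · exact completable_map_of_isLocalRing _ hu' fun q' u' h => ih h
    · refine ih ?_
      simpa using hu'.map (Polynomial.evalRingHom 0)

end QuillenSuslin

section Triangularisation

variable {A : Type*} [CommRing A] {q : A}

/-- The splitting off of the first index of `Fin (k + 1) ⊕ κ`. -/
def consSumEquiv (k : ℕ) (κ : Type*) : Unit ⊕ (Fin k ⊕ κ) ≃ Fin (k + 1) ⊕ κ where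
  toFun := Sum.elim (fun _ => Sum.inl 0) (Sum.map Fin.succ id)
  invFun := Sum.elim (Fin.cases (Sum.inl ()) fun i => Sum.inr (Sum.inl i))
    fun x => Sum.inr (Sum.inr x)
  left_inv := by rintro (_ | _ | _) <;> rfl
  right_inv := by
    rintro (i | _)
    · cases i using Fin.cases <;> rfl
    · rfl

lemma exists_isRelParabolic_mul_eq_zero {κ : Type*} [Fintype κ] [DecidableEq κ]
    (hQ : ∀ (k : ℕ) (i₀ : Fin k) (u : Fin k ⊕ κ → A), RelUnimodular q u → Completable q i₀ u)
    {r k : ℕ} (hrk : r ≤ k) (U : Matrix (Fin r) (Fin k ⊕ κ) A) (V : Matrix (Fin k ⊕ κ) (Fin r) A)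
    (hUV : U * V = 1) (hV : ∀ i j, q ∣ V (Sum.inr i) j) :
    ∃ F : Matrix (Fin k ⊕ κ) (Fin k ⊕ κ) A, IsRelParabolic q F ∧
      (∀ (i : Fin r) (j : Fin k), (i : ℕ) < j → (U * F) i (Sum.inl j) = 0) ∧
      ∀ (i : Fin r) (j : κ), (U * F) i (Sum.inr j) = 0 := by
  induction r generalizing k with
  | zero => exact ⟨1, ⟨by simp, by simp⟩, fun i => i.elim0, fun i => i.elim0⟩
  | succ r ih =>
    obtain ⟨k, rfl⟩ : ∃ k', k = k' + 1 := ⟨k - 1, by omega⟩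
    obtain ⟨G, hG, hG0⟩ := hQ (k + 1) 0 (U 0) ⟨fun x => V x 0, fun j => hV j 0, by
      simpa [mul_apply, dotProduct] using congrFun (congrFun hUV 0) 0⟩
    have hGG : G * G⁻¹ = 1 := mul_nonsing_inv G hG.isUnit_det
    have hGG' : G⁻¹ * G = 1 := nonsing_inv_mul G hG.isUnit_det
    set M := U * G⁻¹ with hM
    set W := G * V with hW
    have hM0 : ∀ x, M 0 x = (1 : Matrix (Fin (k + 1) ⊕ κ) (Fin (k + 1) ⊕ κ) A) (Sum.inl 0) x := by
      intro x
      rw [← hGG, hM, mul_apply, mul_apply]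
      simp [hG0]
    have hMW : M * W = 1 := by
      rw [hM, hW, Matrix.mul_assoc, ← Matrix.mul_assoc G⁻¹, hGG', Matrix.one_mul, hUV]
    have hWq : ∀ i j, q ∣ W (Sum.inr i) j := by
      intro i j
      rw [hW, mul_apply, Fintype.sum_sum_type]
      exact dvd_add (Finset.dvd_sum fun x _ => (hG.dvd i x).mul_right _)
        (Finset.dvd_sum fun x _ => (hV x j).mul_left _)
    have hW0 : ∀ j, W (Sum.inl 0) j = (1 : Matrix (Fin (r + 1)) (Fin (r + 1)) A) 0 j := by
      intro j
      rw [← hMW, mul_apply]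
      simp [hM0, one_apply]
    let σ := consSumEquiv k κ
    obtain ⟨F, hF, hF1, hF2⟩ := ih (Nat.le_of_succ_le_succ hrk)
      (M.submatrix Fin.succ (σ ∘ Sum.inr)) (W.submatrix (σ ∘ Sum.inr) Fin.succ)
      (by
        ext i j
        have h := congrFun (congrFun hMW i.succ) j.succ
        rw [mul_apply, ← σ.sum_comp, Fintype.sum_sum_type] at h
        have h0 : W (σ (Sum.inl ())) j.succ = 0 := by
          simpa [σ, consSumEquiv, one_apply, (Fin.succ_ne_zero j).symm] using hW0 j.succ
        simpa [h0, mul_apply, one_apply] using h)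
      fun i j => hWq i j.succ
    have hkey : ∀ i (y : Fin k ⊕ κ),
        (M * (fromBlocks 1 0 0 F : Matrix (Unit ⊕ (Fin k ⊕ κ)) _ A).submatrix σ.symm σ.symm) i
          (σ (Sum.inr y)) = ∑ x, M i (σ (Sum.inr x)) * F x y := by
      intro i y
      rw [mul_apply, ← σ.sum_comp, Fintype.sum_sum_type]
      simp
    have hkey0 : ∀ y : Fin k ⊕ κ,
        (M * (fromBlocks 1 0 0 F : Matrix (Unit ⊕ (Fin k ⊕ κ)) _ A).submatrix σ.symm σ.symm) 0
          (σ (Sum.inr y)) = 0 := by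
      intro y
      rw [hkey]
      refine Finset.sum_eq_zero fun x _ => ?_
      rw [hM0, one_apply_ne, zero_mul]
      rcases x with x | x
      · simp [σ, consSumEquiv, (Fin.succ_ne_zero x).symm]
      · simp [σ, consSumEquiv]
    refine ⟨G⁻¹ * (fromBlocks 1 0 0 F).submatrix σ.symm σ.symm, hG.inv.mul ⟨?_, ?_⟩, ?_, ?_⟩
    · rw [det_submatrix_equiv_self, det_fromBlocks_zero₂₁, det_one, one_mul]
      exact hF.isUnit_det
    · intro i j
      cases j using Fin.cases with
      | zero => simp [σ, consSumEquiv]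
      | succ j => simpa [σ, consSumEquiv] using hF.dvd i j
    · intro i j hij
      rw [← Matrix.mul_assoc, ← hM]
      cases j using Fin.cases with
      | zero => simp at hij
      | succ j =>
        cases i using Fin.cases with
        | zero => exact hkey0 (Sum.inl j)
        | succ i =>
          have := hkey i.succ (Sum.inl j)
          refine this.trans ?_
          simpa [mul_apply] using hF1 i j (by simpa using hij)
    · intro i j
      rw [← Matrix.mul_assoc, ← hM]
      cases i using Fin.cases with
      | zero => exact hkey0 (Sum.inr j)
      | succ i =>
        refine (hkey i.succ (Sum.inr j)).trans ?_
        simpa [mul_apply] using hF2 i j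

end Triangularisation

section Minors

variable {A : Type*} [CommRing A] {q : A} {l k r : ℕ}

/-- The scalars `t` such that `t • 1` factors through the first `r` rows of `U` with right factor
having all rows of index at least `k` divisible by `q`. -/
def factorIdeal (q : A) (k : ℕ) (hrl : r ≤ l) (U : Matrix (Fin l) (Fin l) A) : Ideal A where
  carrier := {t | ∃ V : Matrix (Fin l) (Fin r) A, (∀ (i : Fin l) j, k ≤ (i : ℕ) → q ∣ V i j) ∧
    U.submatrix (Fin.castLE hrl) id * V = t • (1 : Matrix (Fin r) (Fin r) A)}
  zero_mem' := ⟨0, fun _ _ _ => dvd_zero q, by simp⟩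
  add_mem' := by
    rintro a b ⟨V, hV, hUV⟩ ⟨W, hW, hUW⟩
    exact ⟨V + W, fun i j hi => dvd_add (hV i j hi) (hW i j hi), by
      rw [Matrix.mul_add, hUV, hUW, add_smul]⟩
  smul_mem' := by
    rintro c a ⟨V, hV, hUV⟩
    exact ⟨c • V, fun i j hi => (hV i j hi).mul_left c, by
      rw [Matrix.mul_smul, hUV, smul_eq_mul, mul_smul]⟩

lemma mem_factorIdeal_self (hrl : r ≤ l) {U : Matrix (Fin l) (Fin l) A} (hU : IsUnit U.det) :
    q ∈ factorIdeal q k hrl U := by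
  refine ⟨q • (U⁻¹).submatrix id (Fin.castLE hrl), fun i j _ => dvd_mul_right q _, ?_⟩
  rw [Matrix.mul_smul, ← submatrix_mul _ _ _ _ _ Function.bijective_id, mul_nonsing_inv U hU,
    submatrix_one _ (Fin.castLE_injective hrl)]

lemma det_submatrix_mem_factorIdeal (hrl : r ≤ l) (U : Matrix (Fin l) (Fin l) A)
    {g : Fin r → Fin l} (hg : ∀ i, (g i : ℕ) < k) :
    (U.submatrix (Fin.castLE hrl) g).det ∈ factorIdeal q k hrl U := by
  refine ⟨(1 : Matrix (Fin l) (Fin l) A).submatrix id g *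
    (U.submatrix (Fin.castLE hrl) g).adjugate, fun i j hi => ?_, ?_⟩
  · rw [mul_apply]
    refine Finset.dvd_sum fun c _ => ?_
    rw [submatrix_apply, one_apply_ne, zero_mul]
    · exact dvd_zero q
    · rintro rfl
      exact absurd (hg c) (by simpa using hi)
  · rw [← Matrix.mul_assoc, ← submatrix_mul _ _ _ _ _ Function.bijective_id, Matrix.mul_one,
      mul_adjugate]

lemma eq_castLE_of_strictMono (hrl : r ≤ l) {f : Fin r → Fin l} (hf : StrictMono f)
    (hfr : ∀ i, (f i : ℕ) < r) : f = Fin.castLE hrl := by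
  let f' : Fin r → Fin r := fun i => ⟨f i, hfr i⟩
  have hf' : StrictMono f' := fun i j hij => hf hij
  have h : f' = id := (hf'.range_inj strictMono_id).1 (by
    rw [Set.range_id, (Finite.injective_iff_surjective.1 hf'.injective).range_eq])
  ext i
  have hi : (f' i : ℕ) = i := by rw [h, id]
  exact hi

lemma le_apply_of_strictMono {f : Fin r → Fin l} (hf : StrictMono f) (i : Fin r) :
    (i : ℕ) ≤ f i := by
  obtain ⟨i, hi⟩ := i
  induction i with
  | zero => exact Nat.zero_le _
  | succ i ih =>
    have h : f ⟨i, by omega⟩ < f ⟨i + 1, hi⟩ := hf (by simp)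
    have := ih (by omega)
    rw [Fin.lt_def] at h
    simp only at this ⊢
    omega

lemma mem_factorIdeal_of_minor [IsDomain A] (hq : q ≠ 0) (hrl : r ≤ l)
    {U : Matrix (Fin l) (Fin l) A} (hU : IsUnit U.det) {a : Fin l → ℕ} (ha : Monotone a)
    (har : ∀ i j : Fin l, (i : ℕ) < r → r ≤ (j : ℕ) → a i < a j) {b : A}
    (hb : q ^ (∑ i : Fin r, a (Fin.castLE hrl i)) * b ∈ minorsSet r
      (diagonal (fun i => q ^ a i) * U * diagonal fun i : Fin l => if (i : ℕ) < k then 1 else q)) :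
    b ∈ factorIdeal q k hrl U := by
  obtain ⟨f, g, hf, -, hb⟩ := hb
  have hdet : q ^ (∑ i : Fin r, a (Fin.castLE hrl i)) * b = q ^ (∑ i, a (f i)) *
      (U.submatrix f g).det * ∏ i, if (g i : ℕ) < k then 1 else q := by
    rw [hb, ← Finset.prod_pow_eq_pow_sum]
    rw [← det_diagonal (d := fun i => q ^ a (f i)),
      ← det_diagonal (d := fun i => if (g i : ℕ) < k then 1 else q), ← det_mul, ← det_mul]
    congr 1
    ext i j
    simp [mul_diagonal, diagonal_mul]
  have hle : ∀ i, a (Fin.castLE hrl i) ≤ a (f i) := fun i => ha (le_apply_of_strictMono hf i)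
  obtain ⟨t, ht⟩ := Nat.exists_eq_add_of_le (Finset.sum_le_sum fun i (_ : i ∈ Finset.univ) => hle i)
  rw [ht, pow_add, mul_assoc, mul_assoc] at hdet
  replace hdet := mul_left_cancel₀ (pow_ne_zero _ hq) hdet
  by_cases hfr : ∀ i, (f i : ℕ) < r
  · obtain rfl := eq_castLE_of_strictMono hrl hf hfr
    obtain rfl : t = 0 := by omega
    by_cases hg : ∀ i, (g i : ℕ) < k
    · rw [hdet]
      simpa [hg] using det_submatrix_mem_factorIdeal hrl U hg
    · push Not at hg
      obtain ⟨i, hi⟩ := hg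
      refine Ideal.mem_of_dvd _ ?_ (mem_factorIdeal_self hrl hU)
      have := Finset.dvd_prod_of_mem (fun i => if (g i : ℕ) < k then 1 else q) (Finset.mem_univ i)
      rw [if_neg (by omega)] at this
      rw [hdet]
      exact (this.mul_left _).mul_left _
  · push Not at hfr
    obtain ⟨i, hi⟩ := hfr
    have hlt := Finset.sum_lt_sum (fun i (_ : i ∈ Finset.univ) => hle i)
      ⟨i, Finset.mem_univ i, har (Fin.castLE hrl i) _ i.2 hi⟩
    refine Ideal.mem_of_dvd _ ?_ (mem_factorIdeal_self hrl hU)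
    rw [hdet]
    exact (dvd_pow_self q (by omega)).mul_right _

end Minors

section Diagonalisation

variable {A : Type*} [CommRing A] {q : A} {l k : ℕ}

lemma exists_mul_eq_zero_of_lt
    (hQ : ∀ (k m : ℕ) (i₀ : Fin k) (u : Fin k ⊕ Fin m → A),
      RelUnimodular q u → Completable q i₀ u) {r : ℕ} (hrk : r ≤ k) (hkl : k ≤ l)
    {U : Matrix (Fin l) (Fin l) A} (h : 1 ∈ factorIdeal q k (hrk.trans hkl) U) :
    ∃ F : Matrix (Fin l) (Fin l) A, IsUnit F.det ∧
      (∀ i j : Fin l, k ≤ (i : ℕ) → (j : ℕ) < k → q ∣ F⁻¹ i j) ∧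
      ∀ i j : Fin l, (i : ℕ) < r → i < j → (U * F) i j = 0 := by
  obtain ⟨m, rfl⟩ := Nat.exists_eq_add_of_le hkl
  obtain ⟨V, hV, hUV⟩ := h
  let σ : Fin k ⊕ Fin m ≃ Fin (k + m) := finSumFinEquiv
  obtain ⟨F, hF, hF1, hF2⟩ := exists_isRelParabolic_mul_eq_zero (fun k => hQ k m) hrk
    (U.submatrix (Fin.castLE (hrk.trans hkl)) σ) (V.submatrix σ id) (by
      rw [submatrix_mul_equiv, ← one_smul A (1 : Matrix (Fin r) (Fin r) A), ← hUV]
      rfl) fun i j => hV _ _ (by simp [σ])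
  have hkey : ∀ (i : Fin r) j, (U * F.submatrix σ.symm σ.symm) (Fin.castLE (hrk.trans hkl) i) (σ j)
      = (U.submatrix (Fin.castLE (hrk.trans hkl)) σ * F) i j := by
    intro i j
    rw [mul_apply, ← σ.sum_comp, mul_apply]
    simp
  refine ⟨F.submatrix σ.symm σ.symm, ?_, fun i j hi hj => ?_, fun i j hi hij => ?_⟩
  · rw [det_submatrix_equiv_self]
    exact hF.isUnit_det
  · rw [inv_submatrix_equiv, submatrix_apply]
    obtain ⟨i | i, rfl⟩ := σ.surjective i
    · simp [σ] at hi
      omega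
    obtain ⟨j | j, rfl⟩ := σ.surjective j
    · simpa using hF.inv.dvd i j
    · simp [σ] at hj
  · obtain ⟨j | j, rfl⟩ := σ.surjective j
    · refine (hkey ⟨i, hi⟩ _).trans (hF1 _ _ ?_)
      simpa [σ, Fin.lt_def] using hij
    · exact (hkey ⟨i, hi⟩ _).trans (hF2 _ _)

lemma det_eq_of_diagonal_mul_eq [IsDomain A] {d : Fin l → A} (hd : ∀ i, d i ≠ 0)
    {M N : Matrix (Fin l) (Fin l) A} (h : diagonal d * M = N * diagonal d) : M.det = N.det := by
  have h' := congrArg det h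
  rw [det_mul, det_mul, mul_comm N.det, det_diagonal] at h'
  exact mul_left_cancel₀ (Finset.prod_ne_zero_iff.2 fun i _ => hd i) h'

lemma matrixEquiv_of_one_mem_factorIdeal [IsDomain A] (hq : q ≠ 0)
    (hQ : ∀ (k m : ℕ) (i₀ : Fin k) (u : Fin k ⊕ Fin m → A),
      RelUnimodular q u → Completable q i₀ u) {r : ℕ} (hrk : r ≤ k) (hkl : k ≤ l)
    {U : Matrix (Fin l) (Fin l) A} (hU : IsUnit U.det) {a : Fin l → ℕ} (ha : Monotone a)
    (har : ∀ i j : Fin l, r ≤ (i : ℕ) → a j ≤ a i)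
    (h : 1 ∈ factorIdeal q k (hrk.trans hkl) U) :
    MatrixEquiv (diagonal (fun i => q ^ a i) * U *
        diagonal fun i : Fin l => if (i : ℕ) < k then 1 else q)
      (diagonal fun i : Fin l => q ^ a i * if (i : ℕ) < k then 1 else q) := by
  obtain ⟨F, hF, hF1, hF2⟩ := exists_mul_eq_zero_of_lt hQ hrk hkl h
  let c : Fin l → A := fun i => if (i : ℕ) < k then 1 else q
  have hc : ∀ i, c i ≠ 0 := fun i => by
    dsimp only [c]
    split_ifs
    · exact one_ne_zero
    · exact hq
  have hE : ∃ E : Matrix (Fin l) (Fin l) A,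
      diagonal (fun i => q ^ a i) * (U * F) = E * diagonal fun i => q ^ a i := by
    refine ⟨of fun i j => q ^ (a i - a j) * (U * F) i j, ?_⟩
    ext i j
    rw [diagonal_mul, mul_diagonal, of_apply]
    rcases le_or_gt (a j) (a i) with hij | hij
    · obtain ⟨t, ht⟩ := Nat.exists_eq_add_of_le hij
      rw [ht, Nat.add_sub_cancel_left, pow_add]
      ring
    · rw [hF2 i j (lt_of_not_ge fun hi => (har i j hi).not_gt hij)
        (lt_of_not_ge fun hji => (ha hji).not_gt hij)]
      ring
  have hH : ∃ H : Matrix (Fin l) (Fin l) A, diagonal c * H = F⁻¹ * diagonal c := by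
    have : ∀ i j, c i ∣ F⁻¹ i j * c j := by
      intro i j
      dsimp only [c]
      split_ifs with hi hj hj
      · exact one_dvd _
      · exact one_dvd _
      · exact (hF1 i j (not_lt.1 hi) hj).mul_right _
      · exact dvd_mul_left _ _
    choose H hH using this
    refine ⟨of H, ?_⟩
    ext i j
    rw [diagonal_mul, mul_diagonal, of_apply, hH]
  obtain ⟨E, hE⟩ := hE
  obtain ⟨H, hH⟩ := hH
  refine ⟨E, H, ?_, ?_, ?_⟩
  · rw [← det_eq_of_diagonal_mul_eq (fun i => pow_ne_zero _ hq) hE, det_mul]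
    exact hU.mul hF
  · rw [det_eq_of_diagonal_mul_eq hc hH]
    exact isUnit_nonsing_inv_det F hF
  · change diagonal (fun i => q ^ a i) * U * diagonal c = E * diagonal (fun i => q ^ a i * c i) * H
    rw [← diagonal_mul_diagonal, ← Matrix.mul_assoc E, ← hE, Matrix.mul_assoc _ _ H, hH,
      Matrix.mul_assoc, Matrix.mul_assoc, Matrix.mul_assoc, ← Matrix.mul_assoc F,
      mul_nonsing_inv F hF, Matrix.one_mul]

end Diagonalisation

section Polynomial

lemma RelUnimodular.completable_polyImage {K : Type*} [Field K] {n : ℕ} {p : Polynomial K}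
    {ι κ : Type*} [Fintype ι] [Fintype κ] [DecidableEq ι] [DecidableEq κ]
    {u : ι ⊕ κ → MvPolynomial (Fin (n + 1)) K} (hu : RelUnimodular (polyImage n p) u) (i₀ : ι) :
    Completable (polyImage n p) i₀ u := by
  let E := ((MvPolynomial.renameEquiv K (finSuccEquiv n)).trans
    (MvPolynomial.optionEquivRight K (Fin n))).toRingEquiv
  have hE : E (polyImage n p) = MvPolynomial.C p := by
    have h : (E : _ →+* MvPolynomial (Fin n) (Polynomial K)).comp
        (Polynomial.aeval (MvPolynomial.X 0 : MvPolynomial (Fin (n + 1)) K)).toRingHom =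
        MvPolynomial.C := by
      refine Polynomial.ringHom_ext' (RingHom.ext fun x => ?_) ?_
      · simp [E, MvPolynomial.algebraMap_eq]
      · simp [E]
    exact RingHom.congr_fun h p
  have hu' := hu.map (E : _ →+* MvPolynomial (Fin n) (Polynomial K))
  rw [RingEquiv.coe_toRingHom, hE] at hu'
  have h := (hu'.completable_mvPolynomial n i₀).map (E.symm : _ →+* MvPolynomial (Fin (n + 1)) K)
  rw [RingEquiv.coe_toRingHom, ← hE] at h
  simpa using h

lemma polyImage_ne_zero {K : Type*} [Field K] (n : ℕ) {p : Polynomial K} (hp : p ≠ 0) :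
    polyImage n p ≠ 0 := fun h => hp <| by
  have := congrArg (MvPolynomial.aeval fun _ : Fin (n + 1) => (Polynomial.X : Polynomial K)) h
  rwa [polyImage, ← Polynomial.aeval_algHom_apply, MvPolynomial.aeval_X, map_zero,
    Polynomial.aeval_X_left_apply] at this

lemma exists_forall_lt_iff_of_monotone {k : ℕ} {e : Fin k → ℕ} (he : Monotone e) (s : ℕ) :
    ∃ r ≤ k, ∀ i, e i < s ↔ (i : ℕ) < r := by
  by_cases h : ∃ m, ∃ hm : m < k, s ≤ e ⟨m, hm⟩
  · classical
    obtain ⟨hm, hs⟩ := Nat.find_spec h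
    refine ⟨Nat.find h, hm.le, fun i => ⟨fun hi => ?_, fun hi => ?_⟩⟩
    · by_contra! hle
      exact (hs.trans (he (show (⟨Nat.find h, hm⟩ : Fin k) ≤ i from hle))).not_gt hi
    · by_contra! hle
      exact Nat.find_min h hi ⟨i.2, hle⟩
  · push Not at h
    exact ⟨k, le_rfl, fun i => ⟨fun _ => i.2, fun _ => h i i.2⟩⟩

end Polynomial

/-- let `B = diag(p^{s₁}, …, p^{s_k}, p^s, …, p^s) · U · diag(1, …, 1, p, …, p)`
with `s₁ ≤ ⋯ ≤ s_k ≤ s`, `p ∈ K[x₁]` irreducible and `U ∈ GL_l(A)`.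
If `d_i(B) = p^{s₁ + ⋯ + s_i}` (up to associates) and `J_i(B) = A` for `i = 1, …, k`,
then `B ∼ diag(p^{s₁}, …, p^{s_k}, p^{s+1}, …, p^{s+1})`. -/
theorem stmt5 {K : Type*} [Field K] {n l k : ℕ} (hkl : k ≤ l)
    (p : Polynomial K) (hp : Irreducible p)
    (e : Fin k → ℕ) (he : Monotone e) (sv : ℕ) (hes : ∀ i, e i ≤ sv)
    (U : Matrix (Fin l) (Fin l) (MvPolynomial (Fin (n + 1)) K)) (hU : IsUnit U.det)
    (B : Matrix (Fin l) (Fin l) (MvPolynomial (Fin (n + 1)) K))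
    (hB : B =
      Matrix.diagonal (fun i : Fin l => if h : (i : ℕ) < k
          then polyImage n p ^ e ⟨i, h⟩ else polyImage n p ^ sv) * U *
        Matrix.diagonal (fun i : Fin l => if (i : ℕ) < k then 1 else polyImage n p))
    (hd : ∀ i : Fin k,
      IsGcdOf (polyImage n p ^ (∑ j ∈ Finset.Iic i, e j)) (minorsSet ((i : ℕ) + 1) B))
    (hJ : ∀ i : Fin k,
      Ideal.span {b : MvPolynomial (Fin (n + 1)) K |
        polyImage n p ^ (∑ j ∈ Finset.Iic i, e j) * b ∈ minorsSet ((i : ℕ) + 1) B} = ⊤) :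
    MatrixEquiv B
      (Matrix.diagonal (fun i : Fin l => if h : (i : ℕ) < k
        then polyImage n p ^ e ⟨i, h⟩ else polyImage n p ^ (sv + 1))) := by
  obtain ⟨r, hrk, hr⟩ := exists_forall_lt_iff_of_monotone he sv
  have hq : polyImage n p ≠ 0 := polyImage_ne_zero n hp.ne_zero
  let a : Fin l → ℕ := fun i => if h : (i : ℕ) < k then e ⟨i, h⟩ else sv
  have ha : Monotone a := by
    intro i j hij
    rw [Fin.le_def] at hij
    dsimp only [a]
    split_ifs with hi hj hj
    · exact he hij
    · exact hes _
    · omega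
    · exact le_rfl
  have ha_le : ∀ i, a i ≤ sv := by
    intro i
    dsimp only [a]
    split_ifs
    · exact hes _
    · exact le_rfl
  have ha_ge : ∀ j : Fin l, r ≤ (j : ℕ) → a j = sv := by
    intro j hj
    dsimp only [a]
    split_ifs with hjk
    · exact (hes _).antisymm (not_lt.1 fun h => hj.not_gt ((hr ⟨j, hjk⟩).1 h))
    · rfl
  have ha_lt : ∀ i : Fin l, (i : ℕ) < r → a i < sv := by
    intro i hi
    have hik : (i : ℕ) < k := hi.trans_le hrk
    dsimp only [a]
    rw [dif_pos hik]
    exact (hr ⟨i, hik⟩).2 hi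
  have hD : (fun i : Fin l => if h : (i : ℕ) < k then polyImage n p ^ e ⟨i, h⟩
      else polyImage n p ^ sv) = fun i => polyImage n p ^ a i := by
    funext i
    dsimp only [a]
    split_ifs <;> rfl
  have hD' : (fun i : Fin l => if h : (i : ℕ) < k then polyImage n p ^ e ⟨i, h⟩
      else polyImage n p ^ (sv + 1)) =
      fun i => polyImage n p ^ a i * if (i : ℕ) < k then 1 else polyImage n p := by
    funext i
    dsimp only [a]
    split_ifs
    · rw [mul_one]
    · rw [pow_succ]
  rw [hD] at hB
  rw [hD', hB]
  refine matrixEquiv_of_one_mem_factorIdeal hq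
    (fun _ _ i₀ _ hu => hu.completable_polyImage i₀) hrk hkl hU ha
    (fun i j hi => (ha_le j).trans (ha_ge i hi).ge) ?_
  cases r with
  | zero => exact ⟨0, fun _ j => j.elim0, Subsingleton.elim _ _⟩
  | succ r =>
    rw [← Ideal.eq_top_iff_one, eq_top_iff, ← hJ ⟨r, hrk⟩, Ideal.span_le]
    intro b hb
    refine mem_factorIdeal_of_minor hq (hrk.trans hkl) hU ha
      (fun i j hi hj => (ha_lt i hi).trans_eq (ha_ge j hj).symm) ?_
    have hsum : ∑ i : Fin (r + 1), a (Fin.castLE (hrk.trans hkl) i) =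
        ∑ j ∈ Finset.Iic (⟨r, hrk⟩ : Fin k), e j := ?_
    · rw [← hB, hsum]
      exact hb
    refine Finset.sum_nbij (Fin.castLE hrk) (fun i _ => ?_) (Fin.castLE_injective hrk).injOn
      (fun j hj => ?_) fun i _ => ?_
    · simpa [Fin.le_def] using Nat.lt_succ_iff.1 i.2
    · have hj' : (j : ℕ) ≤ r := by simpa [Fin.le_def] using hj
      exact ⟨⟨j, Nat.lt_succ_iff.2 hj'⟩, by simp, rfl⟩
    · exact dif_pos (i.2.trans_le hrk)
end
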